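/- arXiv:2409.17454 — 8 statements merged into one kernel-verified Lean document; each statement's English description precedes it below -/
import Mathlib

section
/- Let p be a prime and let G be a finite metabelian p-group which is semi-p-abelian. Then G is strongly semi-p-abelian, i.e., G is semi-p^i-abelian for every i ≥ 1. -/
open Finset
open scoped commutatorElement

section CharP

variable {K : Type*} [CommRing K] [IsDomain K] (p : ℕ) [Fact p.Prime] [CharP K p]

theorem geom_sum_eq_sub_one_pow_of_charP {a : K} (ha : a ≠ 1) :
    ∑ i ∈ range p, a ^ i = (a - 1) ^ (p - 1) := by
  apply mul_right_cancel₀ (sub_ne_zero.mpr ha)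
  rw [geom_sum_mul, ← pow_succ, Nat.sub_add_cancel (Fact.out : p.Prime).one_le, sub_pow_char,
    one_pow]

theorem sum_pow_mul_geom_sum_of_charP {a b : K} (ha : a ≠ 1) (hb : b ≠ 1) (hab : a * b ≠ 1) :
    ∑ j ∈ range p, a ^ j * ∑ i ∈ range j, b ^ i =
      a * ∑ i ∈ range (p - 1), (a * b - 1) ^ i * (a - 1) ^ (p - 1 - 1 - i) := by
  apply mul_right_cancel₀ (sub_ne_zero.mpr hb)
  have h := geom_sum₂_mul (a * b - 1) (a - 1) (p - 1)
  rw [mul_right_comm, mul_comm _ (∑ i ∈ range (p - 1), _), show a * (b - 1) = a * b - 1 - (a - 1) by ring, h,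
    ← geom_sum_eq_sub_one_pow_of_charP p hab, ← geom_sum_eq_sub_one_pow_of_charP p ha,
    ← sum_sub_distrib, sum_mul]
  refine sum_congr rfl fun j _ => ?_
  rw [mul_assoc, geom_sum_mul]
  ring

end CharP

section ModP

variable {R : Type*} [CommRing R] (p : ℕ) [Fact p.Prime]

theorem MvPolynomial.exists_aeval_eq_natCast_mul {σ : Type*} {F H : MvPolynomial σ ℤ}
    (h : MvPolynomial.map (Int.castRingHom (ZMod p)) F =
      MvPolynomial.map (Int.castRingHom (ZMod p)) H) (f : σ → R) :
    ∃ s : R, MvPolynomial.aeval f F = MvPolynomial.aeval f H + p * s := by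
  obtain ⟨s, hs⟩ := (MvPolynomial.C_dvd_iff_zmod p (F - H)).mpr (by rw [map_sub, h, sub_self])
  refine ⟨MvPolynomial.aeval f s, ?_⟩
  rw [← sub_eq_iff_eq_add', ← map_sub, hs]
  simp

theorem MvPolynomial.ne_one_of_constantCoeff_eq_zero {σ K : Type*} [CommRing K] [Nontrivial K]
    {F : MvPolynomial σ K} (hF : MvPolynomial.constantCoeff F = 0) : F ≠ 1 := by
  rintro rfl
  simp at hF

theorem exists_geom_sum_eq_sub_one_pow (a : R) :
    ∃ s : R, ∑ i ∈ range p, a ^ i = (a - 1) ^ (p - 1) + p * s := by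
  have h := geom_sum_eq_sub_one_pow_of_charP p (a := MvPolynomial.X (R := ZMod p) ())
    (MvPolynomial.ne_one_of_constantCoeff_eq_zero (by simp))
  obtain ⟨s, hs⟩ := MvPolynomial.exists_aeval_eq_natCast_mul (R := R) p
    (F := ∑ i ∈ range p, MvPolynomial.X () ^ i)
    (H := (MvPolynomial.X () - 1) ^ (p - 1)) (by simpa using h) fun _ => a
  exact ⟨s, by simpa using hs⟩

theorem exists_sum_pow_mul_geom_sum (a b : R) :
    ∃ s : R, ∑ j ∈ range p, a ^ j * ∑ i ∈ range j, b ^ i =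
      a * ∑ i ∈ range (p - 1), (a * b - 1) ^ i * (a - 1) ^ (p - 1 - 1 - i) + p * s := by
  have h := sum_pow_mul_geom_sum_of_charP p (a := MvPolynomial.X (R := ZMod p) (0 : Fin 2))
    (b := MvPolynomial.X 1) (MvPolynomial.ne_one_of_constantCoeff_eq_zero (by simp))
    (MvPolynomial.ne_one_of_constantCoeff_eq_zero (by simp))
    (MvPolynomial.ne_one_of_constantCoeff_eq_zero (by simp))
  obtain ⟨s, hs⟩ := MvPolynomial.exists_aeval_eq_natCast_mul (R := R) p
    (F := ∑ j ∈ range p, MvPolynomial.X (0 : Fin 2) ^ j * ∑ i ∈ range j, MvPolynomial.X 1 ^ i)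
    (H := MvPolynomial.X 0 * ∑ i ∈ range (p - 1),
      (MvPolynomial.X 0 * MvPolynomial.X 1 - 1) ^ i * (MvPolynomial.X 0 - 1) ^ (p - 1 - 1 - i))
    (by simpa using h) ![a, b]
  exact ⟨s, by simpa using hs⟩

end ModP

section Torsion

variable {M : Type*} [AddCommGroup M] {p : ℕ}

theorem eq_zero_of_coprime_nsmul {n : ℕ} (h : Nat.Coprime n p) {m : M} (hn : n • m = 0)
    (hp : p • m = 0) : m = 0 := by
  rw [← AddMonoid.addOrderOf_eq_one_iff, ← Nat.dvd_one, ← h]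
  exact Nat.dvd_gcd (addOrderOf_dvd_of_nsmul_eq_zero hn) (addOrderOf_dvd_of_nsmul_eq_zero hp)

/-- A polynomial of degree less than `p` with `p`-torsion coefficients which vanishes at
`0, …, p - 1` is zero. -/
theorem eq_zero_of_sum_pow_nsmul_eq_zero [Fact p.Prime] (c : ℕ → M)
    (hc : ∀ i < p, p • c i = 0) (h : ∀ k < p, ∑ i ∈ range p, k ^ i • c i = 0) :
    ∀ i < p, c i = 0 := by
  intro i hi
  let v : Fin p → ℤ := fun k => (k : ℕ)
  let V := Matrix.vandermonde v
  have hdet : V.det • c i = 0 := by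
    have h1 : ∀ k : Fin p, ∑ j : Fin p, V k j • c j = 0 := by
      intro k
      have h2 := h k k.2
      rw [← Fin.sum_univ_eq_sum_range (fun i => (k : ℕ) ^ i • c i)] at h2
      rw [← h2]
      refine sum_congr rfl fun j _ => ?_
      rw [← natCast_zsmul]
      simp [V, v, Matrix.vandermonde_apply]
    have h3 : ∑ k : Fin p, V.adjugate ⟨i, hi⟩ k • ∑ j : Fin p, V k j • c j = 0 :=
      sum_eq_zero fun k _ => by rw [h1, smul_zero]
    simp_rw [smul_sum, smul_smul] at h3
    rw [sum_comm] at h3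
    simp_rw [← sum_smul, ← Matrix.mul_apply, Matrix.adjugate_mul, Matrix.smul_apply,
      Matrix.one_apply, smul_eq_mul, mul_ite, mul_one, mul_zero, ite_smul, zero_smul] at h3
    simpa using h3
  refine eq_zero_of_coprime_nsmul (n := V.det.natAbs) (p := p) ?_ ?_ (hc i hi)
  · rw [Nat.coprime_comm, Nat.Prime.coprime_iff_not_dvd Fact.out, ← Int.natCast_dvd,
      Matrix.det_vandermonde]
    have hp : Prime (p : ℤ) := Nat.prime_iff_prime_int.mp Fact.out
    rw [hp.dvd_finsetProd_iff]
    rintro ⟨j, _, hj⟩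
    rw [hp.dvd_finsetProd_iff] at hj
    obtain ⟨k, hk, hjk⟩ := hj
    have hlt : j < k := by simpa using hk
    have hlt' : (j : ℕ) < k := hlt
    have := Int.le_of_dvd (by simp [v]; omega) hjk
    simp only [v] at this
    omega
  · rcases Int.natAbs_eq V.det with h4 | h4
    · rw [h4, natCast_zsmul] at hdet
      exact hdet
    · rw [h4, neg_smul, natCast_zsmul, neg_eq_zero] at hdet
      exact hdet

end Torsion

section PairIdeal

variable {R : Type*} [CommRing R]

theorem Ideal.span_pair_pow_le {x y : R} {n : ℕ} {J : Ideal R}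
    (h : ∀ i ≤ n, x ^ (n - i) * y ^ i ∈ J) : Ideal.span {x, y} ^ n ≤ J := by
  rw [Ideal.span_insert, sup_comm, ← Ideal.add_eq_sup, add_pow]
  refine Finset.sum_induction _ (· ≤ J) (fun _ _ => sup_le) bot_le fun i hi => ?_
  refine Ideal.mul_le_left.trans ?_
  rw [Ideal.span_singleton_pow, Ideal.span_singleton_pow, Ideal.span_singleton_mul_span_singleton,
    Ideal.span_singleton_le_iff_mem, mul_comm]
  exact h i (Nat.lt_succ_iff.mp (mem_range.mp hi))

theorem Ideal.pow_sub_pow_mem_pow_succ {I : Ideal R} {u v : R} (hu : u ∈ I) (hv : v ∈ I)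
    (huv : u - v ∈ I ^ 2) (n : ℕ) : u ^ n - v ^ n ∈ I ^ (n + 1) := by
  induction n with
  | zero => simp
  | succ n ih =>
    have h : u ^ (n + 1) - v ^ (n + 1) = (u ^ n - v ^ n) * u + v ^ n * (u - v) := by ring
    rw [h]
    refine add_mem ?_ ?_
    · rw [pow_succ]
      exact Ideal.mul_mem_mul ih hu
    · rw [show n + 1 + 1 = n + 2 from rfl, pow_add]
      exact Ideal.mul_mem_mul (Ideal.pow_mem_pow hv n) huv

theorem mul_pow_sub_one_mem_span_pair (a b : R) (k : ℕ) :
    a * b ^ k - 1 ∈ Ideal.span {a - 1, b - 1} := by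
  induction k with
  | zero => simpa using Ideal.subset_span (Set.mem_insert (a - 1) {b - 1})
  | succ k ih =>
    rw [show a * b ^ (k + 1) - 1 = (a * b ^ k - 1) + a * b ^ k * (b - 1) by ring]
    exact add_mem ih (Ideal.mul_mem_left _ _ (Ideal.subset_span (by simp)))

theorem linear_mem_span_pair (x y c : R) : x + c * y ∈ Ideal.span {x, y} :=
  add_mem (Ideal.subset_span (by simp)) (Ideal.mul_mem_left _ _ (Ideal.subset_span (by simp)))

theorem mul_pow_sub_one_sub_linear_mem (a b : R) (k : ℕ) :
    a * b ^ k - 1 - ((a - 1) + k * (b - 1)) ∈ Ideal.span {a - 1, b - 1} ^ 2 := by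
  induction k with
  | zero => simp
  | succ k ih =>
    rw [show a * b ^ (k + 1) - 1 - ((a - 1) + ((k + 1 : ℕ) : R) * (b - 1)) =
      (a * b ^ k - 1 - ((a - 1) + k * (b - 1))) + (a * b ^ k - 1) * (b - 1) by push_cast; ring]
    refine add_mem ih ?_
    rw [sq]
    exact Ideal.mul_mem_mul (mul_pow_sub_one_mem_span_pair a b k) (Ideal.subset_span (by simp))

variable {M : Type*} [AddCommGroup M] [Module R M] {p : ℕ}

theorem nsmul_smul_eq_zero {m : M} (hm : p • m = 0) (r : R) : p • r • m = 0 := by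
  rw [smul_comm, hm, smul_zero]

theorem linear_pow_smul (x y : R) (k n : ℕ) (m : M) :
    (x + k * y) ^ n • m =
      ∑ i ∈ range (n + 1), k ^ i • n.choose i • (x ^ (n - i) * y ^ i) • m := by
  rw [add_comm, add_pow, sum_smul]
  refine sum_congr rfl fun i _ => ?_
  rw [← Nat.cast_smul_eq_nsmul R, ← Nat.cast_smul_eq_nsmul R (n.choose i), smul_smul, smul_smul]
  congr 1
  push_cast
  ring

/-- If every `a * b ^ k - 1` has its `(p - 1)`-st power acting as zero on `p`-torsion, then so does
the `(p - 1)`-st power of the ideal generated by `a - 1` and `b - 1`. -/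
theorem span_pair_pow_smul_eq_zero [Fact p.Prime] {a b : R}
    (ha : ∀ (k : ℕ) (m : M), p • m = 0 → (a * b ^ k - 1) ^ (p - 1) • m = 0)
    (hb : ∀ m : M, p • m = 0 → (b - 1) ^ (p - 1) • m = 0) {r : R}
    (hr : r ∈ Ideal.span {a - 1, b - 1} ^ (p - 1)) {m : M} (hm : p • m = 0) : r • m = 0 := by
  have hp : p.Prime := Fact.out
  have hp1 : p - 1 + 1 = p := Nat.sub_add_cancel hp.one_le
  set I := Ideal.span {a - 1, b - 1} with hI
  have step : ∀ t, (∀ r ∈ I ^ (p - 1 + t + 1), ∀ m : M, p • m = 0 → r • m = 0) →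
      ∀ r ∈ I ^ (p - 1 + t), ∀ m : M, p • m = 0 → r • m = 0 := by
    intro t ht r hr m hm
    rw [pow_add] at hr
    refine Submodule.mul_induction_on hr ?_ fun u v hu hv => by rw [add_smul, hu, hv, add_zero]
    intro r₁ hr₁ r₂ hr₂
    have hm₂ : p • r₂ • m = 0 := nsmul_smul_eq_zero hm r₂
    suffices h : I ^ (p - 1) ≤ (Submodule.span R {r₂ • m}).annihilator by
      rw [mul_smul]
      exact (Submodule.mem_annihilator_span_singleton _ _).mp (h hr₁)
    refine Ideal.span_pair_pow_le fun i hi => ?_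
    rw [Submodule.mem_annihilator_span_singleton]
    have key := eq_zero_of_sum_pow_nsmul_eq_zero (p := p)
      (fun i => (p - 1).choose i • ((a - 1) ^ (p - 1 - i) * (b - 1) ^ i) • r₂ • m)
      (fun i _ => by rw [smul_comm, nsmul_smul_eq_zero hm₂, smul_zero]) ?_ i (by omega)
    · exact eq_zero_of_coprime_nsmul (hp.coprime_choose_of_lt (by omega) hi).symm key
        (nsmul_smul_eq_zero hm₂ _)
    · intro k _
      have h1 := linear_pow_smul (a - 1) (b - 1) k (p - 1) (r₂ • m)
      rw [hp1] at h1
      rw [← h1]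
      have h2 := Ideal.pow_sub_pow_mem_pow_succ (mul_pow_sub_one_mem_span_pair a b k)
        (linear_mem_span_pair (a - 1) (b - 1) (k : R)) (mul_pow_sub_one_sub_linear_mem a b k)
        (p - 1)
      have h3 := ht _ (show _ ∈ I ^ (p - 1 + t + 1) by
        rw [add_right_comm, pow_add]
        exact Ideal.mul_mem_mul h2 hr₂) m hm
      rw [mul_smul, sub_smul, ha k _ hm₂, zero_sub, neg_eq_zero] at h3
      exact h3
  have top : ∀ r ∈ I ^ (p - 1 + (p - 1)), ∀ m : M, p • m = 0 → r • m = 0 := by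
    intro r hr m hm
    rw [hI, Ideal.span_insert] at hr
    have := Ideal.sup_pow_add_le_pow_sup_pow hr
    rw [Ideal.span_singleton_pow, Ideal.span_singleton_pow, Submodule.mem_sup] at this
    obtain ⟨u, hu, v, hv, rfl⟩ := this
    obtain ⟨u, rfl⟩ := Ideal.mem_span_singleton.mp hu
    obtain ⟨v, rfl⟩ := Ideal.mem_span_singleton.mp hv
    have h0 := ha 0 m hm
    rw [pow_zero, mul_one] at h0
    rw [add_smul, mul_comm, mul_comm _ v, mul_smul, mul_smul, h0, hb m hm]
    simp
  have down : ∀ t, (∀ r ∈ I ^ (p - 1 + t), ∀ m : M, p • m = 0 → r • m = 0) →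
      ∀ r ∈ I ^ (p - 1), ∀ m : M, p • m = 0 → r • m = 0 := by
    intro t
    induction t with
    | zero => exact id
    | succ t ih => exact fun h => ih (step t h)
  exact down _ top r hr m hm

/-- If `α` bounds the `p`-torsion of the multiples of `n`, which in turn bounds the annihilator of
`β`, then the vanishing of `(a * b ^ k - 1) ^ (p - 2)` on the combinations of `α` and `β` below
forces the `(p - 2)`-nd power of the ideal generated by `a - 1` and `b - 1` to map `n` to
`p`-torsion. -/
theorem nsmul_span_pair_pow_smul_eq_zero [Fact p.Prime] {a b : R}
    (hI : ∀ r ∈ Ideal.span {a - 1, b - 1} ^ (p - 1), ∀ m : M, p • m = 0 → r • m = 0)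
    {α β n : M} (hα : p • α = 0) (hβ : p • β = 0)
    (hk : ∀ k : ℕ, (a * b ^ k - 1) ^ (p - 2) • (α + (a * ∑ i ∈ range k, b ^ i) • β) = 0)
    (hαn : ∀ r : R, r • α = 0 → p • r • n = 0) (hnβ : ∀ r : R, p • r • n = 0 → r • β = 0)
    {r : R} (hr : r ∈ Ideal.span {a - 1, b - 1} ^ (p - 2)) : p • r • n = 0 := by
  have hp : p.Prime := Fact.out
  obtain ⟨q, hq⟩ : ∃ q, p = q + 2 := ⟨p - 2, by have := hp.two_le; omega⟩
  rw [show p - 2 = q by omega] at hk hr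
  rw [show p - 1 = q + 1 by omega] at hI
  set I := Ideal.span {a - 1, b - 1}
  let P : ℕ → R := fun i => (a - 1) ^ (q - i) * (b - 1) ^ i
  let c : ℕ → M := fun i =>
    q.choose i • P i • α + if i = 0 then 0 else q.choose (i - 1) • P (i - 1) • β
  have hlin : ∀ k : ℕ, ((a - 1) + k * (b - 1)) ^ q • (α + k • β) = 0 := by
    intro k
    have h1 := hI _ (Ideal.pow_sub_pow_mem_pow_succ (mul_pow_sub_one_mem_span_pair a b k)
      (linear_mem_span_pair (a - 1) (b - 1) (k : R)) (mul_pow_sub_one_sub_linear_mem a b k) q)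
      (α + k • β) (by rw [smul_add, hα, smul_comm, hβ, smul_zero, zero_add])
    have h2 : a * ∑ i ∈ range k, b ^ i - k ∈ I := by
      have h3 : a * ∑ i ∈ range k, b ^ i - k = ∑ i ∈ range k, (a * b ^ i - 1) := by
        rw [sum_sub_distrib, mul_sum]
        simp
      rw [h3]
      exact sum_mem fun i _ => mul_pow_sub_one_mem_span_pair a b i
    have h4 := hI _ (show (a * b ^ k - 1) ^ q * (a * ∑ i ∈ range k, b ^ i - k) ∈ I ^ (q + 1) by
      rw [pow_succ]
      exact Ideal.mul_mem_mul (Ideal.pow_mem_pow (mul_pow_sub_one_mem_span_pair a b k) q) h2) β hβ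
    have h5 := hk k
    rw [mul_smul, sub_smul, Nat.cast_smul_eq_nsmul] at h4
    rw [show α + (a * ∑ i ∈ range k, b ^ i) • β =
      (α + k • β) + ((a * ∑ i ∈ range k, b ^ i) • β - k • β) by abel, smul_add, h4, add_zero] at h5
    rw [sub_smul, h5, zero_sub, neg_eq_zero] at h1
    exact h1
  have hc : ∀ i < p, c i = 0 := by
    apply eq_zero_of_sum_pow_nsmul_eq_zero c
    · intro i _
      have h1 : ∀ (j : ℕ) (s : R) (m : M), p • m = 0 → p • j • s • m = 0 := by
        intro j s m hm
        rw [smul_comm, nsmul_smul_eq_zero hm, smul_zero]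
      simp only [c]
      rw [smul_add, h1 _ _ _ hα, zero_add]
      split_ifs
      · exact smul_zero _
      · exact h1 _ _ _ hβ
    · intro k _
      have h1 := hlin k
      rw [smul_add, linear_pow_smul, linear_pow_smul] at h1
      simp only [c, smul_add, sum_add_distrib]
      rw [hq, sum_range_succ, sum_range_succ' _ (q + 1)]
      refine Eq.trans ?_ h1
      simp only [Nat.choose_succ_self, zero_smul, smul_zero, add_zero, P, if_true,
        Nat.add_one_ne_zero, if_false, Nat.add_sub_cancel]
      refine congrArg _ (sum_congr rfl fun i _ => ?_)
      rw [pow_succ, mul_smul, smul_comm k (q.choose i), smul_comm k]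
  have hP : ∀ i ≤ q, p • P i • n = 0 := by
    intro i
    induction i with
    | zero =>
      intro _
      have h1 := hc 0 hp.pos
      simp only [c, Nat.choose_zero_right, one_smul, if_true, add_zero] at h1
      exact hαn _ h1
    | succ i ih =>
      intro hi
      have h1 := hc (i + 1) (by omega)
      simp only [c, Nat.add_one_ne_zero, if_false, Nat.add_sub_cancel] at h1
      rw [hnβ _ (ih (by omega)), smul_zero, add_zero] at h1
      exact hαn _ (eq_zero_of_coprime_nsmul (hp.coprime_choose_of_lt (by omega) hi).symm h1
        (nsmul_smul_eq_zero hα _))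
  have hle : I ^ q ≤ (Submodule.span R {p • n}).annihilator :=
    Ideal.span_pair_pow_le fun i hi => by
      rw [Submodule.mem_annihilator_span_singleton, smul_comm]
      exact hP i hi
  have := (Submodule.mem_annihilator_span_singleton _ _).mp (hle hr)
  rwa [smul_comm] at this

end PairIdeal

/-- An `R`-module `M` identified with a subgroup of `G` that contains all commutators, on which the
elements of `G` act by conjugation through elements of the commutative ring `R`. -/
structure CommutatorModule (G R M : Type*) [Group G] [CommRing R] [AddCommGroup M]
    [Module R M] where
  /-- The ring element through which a group element acts. -/
  act : G →* R
  /-- The inclusion of the module into the group. -/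
  incl : Multiplicative M →* G
  incl_injective : Function.Injective incl
  incl_act_smul : ∀ (g : G) (m : M),
    incl (Multiplicative.ofAdd (act g • m)) = g * incl (Multiplicative.ofAdd m) * g⁻¹
  /-- The commutator as an element of the module. -/
  comm : G → G → M
  incl_comm : ∀ g h : G, incl (Multiplicative.ofAdd (comm g h)) = ⁅g, h⁆

namespace CommutatorModule

variable {G R M : Type*} [Group G] [CommRing R] [AddCommGroup M] [Module R M]
  (D : CommutatorModule G R M)

/-- The group element given by a module element. -/
def toGroup (m : M) : G := D.incl (Multiplicative.ofAdd m)

theorem toGroup_injective : Function.Injective D.toGroup :=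
  D.incl_injective.comp Multiplicative.ofAdd.injective

theorem toGroup_zero : D.toGroup 0 = 1 := map_one D.incl

theorem toGroup_add (m n : M) : D.toGroup (m + n) = D.toGroup m * D.toGroup n :=
  map_mul D.incl _ _

theorem toGroup_nsmul (k : ℕ) (m : M) : D.toGroup (k • m) = D.toGroup m ^ k :=
  map_pow D.incl _ _

theorem toGroup_eq_one_iff {m : M} : D.toGroup m = 1 ↔ m = 0 := by
  rw [← D.toGroup_zero, D.toGroup_injective.eq_iff]

theorem toGroup_act_smul (g : G) (m : M) : D.toGroup (D.act g • m) = g * D.toGroup m * g⁻¹ :=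
  D.incl_act_smul g m

theorem toGroup_comm (g h : G) : D.toGroup (D.comm g h) = ⁅g, h⁆ := D.incl_comm g h

theorem comm_mul_left (g g' h : G) :
    D.comm (g * g') h = D.act g • D.comm g' h + D.comm g h := by
  apply D.toGroup_injective
  simp only [toGroup_add, toGroup_act_smul, toGroup_comm, commutatorElement_def]
  group

theorem comm_swap (g h : G) : D.comm h g = -D.comm g h := by
  apply D.toGroup_injective
  rw [← mul_left_inj (D.toGroup (D.comm g h)), ← D.toGroup_add (-_), neg_add_cancel, toGroup_comm,
    toGroup_comm, toGroup_zero, commutatorElement_def, commutatorElement_def]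
  group

theorem comm_self (g : G) : D.comm g g = 0 := by
  rw [← D.toGroup_eq_one_iff, toGroup_comm, commutatorElement_self]

theorem comm_one_left (h : G) : D.comm 1 h = 0 := by
  rw [← D.toGroup_eq_one_iff, toGroup_comm, commutatorElement_one_left]

theorem comm_mul_right (g h h' : G) :
    D.comm g (h * h') = D.act h • D.comm g h' + D.comm g h := by
  rw [comm_swap, comm_mul_left, D.comm_swap g h, D.comm_swap g h']
  module

theorem comm_pow_left (g h : G) (k : ℕ) :
    D.comm (g ^ k) h = (∑ i ∈ range k, D.act g ^ i) • D.comm g h := by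
  induction k with
  | zero => simp [comm_one_left]
  | succ k ih => rw [pow_succ, comm_mul_left, ih, sum_range_succ, add_smul, map_pow, add_comm]

theorem comm_pow_right (g h : G) (k : ℕ) :
    D.comm g (h ^ k) = (∑ i ∈ range k, D.act h ^ i) • D.comm g h := by
  rw [comm_swap, comm_pow_left, D.comm_swap g h, smul_neg, neg_neg]

theorem toGroup_mul_pow (m : M) (g : G) (k : ℕ) :
    (D.toGroup m * g) ^ k = D.toGroup ((∑ i ∈ range k, D.act g ^ i) • m) * g ^ k := by
  induction k with
  | zero => simp [toGroup_zero]
  | succ k ih =>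
    rw [pow_succ, ih, sum_range_succ, add_smul, toGroup_add, pow_succ, ← map_pow,
      toGroup_act_smul]
    group

theorem mul_pow_eq (g h : G) (k : ℕ) :
    (g * h) ^ k = D.toGroup ((∑ j ∈ range k, D.act g ^ j * ∑ i ∈ range j, D.act h ^ i) •
      D.comm h g) * (g ^ k * h ^ k) := by
  induction k with
  | zero => simp [toGroup_zero]
  | succ k ih =>
    rw [pow_succ, ih, sum_range_succ, add_smul, toGroup_add, mul_smul, ← comm_pow_left, ← map_pow,
      toGroup_act_smul, toGroup_comm, commutatorElement_def]
    group

theorem toGroup_pow_eq_one_iff {p : ℕ} {m : M} : D.toGroup m ^ p = 1 ↔ p • m = 0 := by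
  rw [← toGroup_nsmul, toGroup_eq_one_iff]

variable {p : ℕ}

theorem geom_sum_smul_eq_zero_iff (hsemi : ∀ a b : G, (a * b) ^ p = 1 ↔ a ^ p * b ^ p = 1)
    (g : G) (m : M) : (∑ i ∈ range p, D.act g ^ i) • m = 0 ↔ p • m = 0 := by
  have h := hsemi (D.toGroup m * g) g⁻¹
  rw [mul_inv_cancel_right, toGroup_mul_pow, inv_pow, mul_inv_cancel_right,
    toGroup_pow_eq_one_iff, toGroup_eq_one_iff] at h
  exact h.symm

theorem act_pow_smul (hsemi : ∀ a b : G, (a * b) ^ p = 1 ↔ a ^ p * b ^ p = 1)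
    (g : G) {m : M} (hm : p • m = 0) : D.act (g ^ p) • m = m := by
  rw [map_pow, ← sub_eq_zero, show D.act g ^ p • m - m = (D.act g ^ p - 1) • m by module,
    ← geom_sum_mul, mul_comm, mul_smul,
    (D.geom_sum_smul_eq_zero_iff hsemi g m).mpr hm, smul_zero]

theorem act_sub_one_pow_smul [Fact p.Prime]
    (hsemi : ∀ a b : G, (a * b) ^ p = 1 ↔ a ^ p * b ^ p = 1)
    (g : G) {m : M} (hm : p • m = 0) : (D.act g - 1) ^ (p - 1) • m = 0 := by
  obtain ⟨s, hs⟩ := exists_geom_sum_eq_sub_one_pow p (D.act g)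
  have h := (D.geom_sum_smul_eq_zero_iff hsemi g m).mpr hm
  rwa [hs, add_smul, mul_smul, Nat.cast_smul_eq_nsmul, nsmul_smul_eq_zero hm, add_zero] at h

theorem nsmul_comm_eq_zero (hsemi : ∀ a b : G, (a * b) ^ p = 1 ↔ a ^ p * b ^ p = 1)
    (g : G) {z : G} (hz : z ^ p = 1) : p • D.comm g z = 0 := by
  rw [← D.toGroup_pow_eq_one_iff, toGroup_comm, commutatorElement_def, hsemi, inv_pow, hz, conj_pow,
    hz]
  simp

theorem act_sub_one_pow_smul_comm [Fact p.Prime]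
    (hsemi : ∀ a b : G, (a * b) ^ p = 1 ↔ a ^ p * b ^ p = 1) (g : G) {z : G} (hz : z ^ p = 1)
    (hzM : ∀ m : M, p • m = 0 → D.act z • m = m) :
    (D.act g - 1) ^ (p - 2) • D.comm g z = 0 := by
  have hcomm := D.nsmul_comm_eq_zero hsemi g hz
  have hpow : ∀ j : ℕ, D.act z ^ j • D.comm g z = D.comm g z := by
    intro j
    induction j with
    | zero => simp
    | succ j ih => rw [pow_succ, mul_smul, hzM _ hcomm, ih]
  have h1 : (z * g) ^ p * g⁻¹ ^ p = 1 := by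
    rw [← hsemi, mul_inv_cancel_right, hz]
  rw [D.mul_pow_eq, hz, one_mul, inv_pow, mul_inv_cancel_right, toGroup_eq_one_iff, sum_smul] at h1
  obtain ⟨s, hs⟩ := exists_sum_pow_mul_geom_sum p 1 (D.act g)
  have h2 : (∑ j ∈ range p, (1 : R) ^ j * ∑ i ∈ range j, D.act g ^ i) • D.comm g z = 0 := by
    rw [sum_smul, ← h1]
    refine sum_congr rfl fun j _ => ?_
    rw [one_pow, one_mul, mul_comm, mul_smul, hpow]
  obtain ⟨q, hq⟩ : ∃ q, p = q + 2 :=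
    ⟨p - 2, by have := (Fact.out : p.Prime).two_le; omega⟩
  rw [hs, add_smul, mul_smul (p : R), Nat.cast_smul_eq_nsmul, nsmul_smul_eq_zero hcomm, add_zero,
    one_mul, one_mul, show p - 1 = q + 1 by omega, sum_range_succ, sum_eq_zero] at h2
  · simpa [show p - 2 = q by omega] using h2
  · intro i hi
    rw [mem_range] at hi
    rw [sub_self, zero_pow (by omega), mul_zero]

/-- If an element `z` with `z ^ p = 1` detects, through its commutators with `g` and `h`, the
`p`-torsion among the multiples of `⁅g, h⁆`, then `(g * h) ^ p` and `g ^ p * h ^ p` differ by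
an element of order dividing `p`. -/
theorem exists_mul_pow_eq [Fact p.Prime]
    (hsemi : ∀ a b : G, (a * b) ^ p = 1 ↔ a ^ p * b ^ p = 1) {g h z : G} (hz : z ^ p = 1)
    (hzM : ∀ m : M, p • m = 0 → D.act z • m = m)
    (hg : ∀ r : R, r • D.comm g z = 0 → p • r • D.comm g h = 0)
    (hh : ∀ r : R, p • r • D.comm g h = 0 → r • D.comm h z = 0) :
    ∃ m : M, p • m = 0 ∧ (g * h) ^ p = D.toGroup m * (g ^ p * h ^ p) := by
  have hI : ∀ r ∈ Ideal.span {D.act g - 1, D.act h - 1} ^ (p - 1), ∀ m : M,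
      p • m = 0 → r • m = 0 := by
    intro r hr m hm
    refine span_pair_pow_smul_eq_zero (fun k m hm => ?_)
      (fun m hm => D.act_sub_one_pow_smul hsemi h hm) hr hm
    rw [← map_pow, ← map_mul]
    exact D.act_sub_one_pow_smul hsemi _ hm
  have hγ : ∀ r ∈ Ideal.span {D.act g - 1, D.act h - 1} ^ (p - 2),
      p • r • D.comm g h = 0 := by
    intro r hr
    refine nsmul_span_pair_pow_smul_eq_zero hI (D.nsmul_comm_eq_zero hsemi g hz)
      (D.nsmul_comm_eq_zero hsemi h hz) (fun k => ?_) hg hh hr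
    rw [mul_smul, ← comm_pow_left, add_comm, ← comm_mul_left, ← map_pow, ← map_mul]
    exact D.act_sub_one_pow_smul_comm hsemi _ hz hzM
  have hsq : p • p • D.comm g h = 0 := by
    have h1 := hg p (by rw [Nat.cast_smul_eq_nsmul, D.nsmul_comm_eq_zero hsemi g hz])
    rwa [Nat.cast_smul_eq_nsmul] at h1
  refine ⟨_, ?_, D.mul_pow_eq g h p⟩
  obtain ⟨s, hs⟩ := exists_sum_pow_mul_geom_sum p (D.act g) (D.act h)
  rw [comm_swap, smul_neg, smul_neg, neg_eq_zero, hs, add_smul, smul_add, mul_comm (p : R),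
    mul_smul s, Nat.cast_smul_eq_nsmul, smul_comm p s, hsq, smul_zero, add_zero]
  refine hγ _ (Ideal.mul_mem_left _ _ (sum_mem fun i hi => ?_))
  rw [mem_range] at hi
  rw [show p - 2 = i + (p - 1 - 1 - i) by omega, pow_add]
  refine Ideal.mul_mem_mul (Ideal.pow_mem_pow ?_ _)
    (Ideal.pow_mem_pow (Ideal.subset_span (by simp)) _)
  simpa using mul_pow_sub_one_mem_span_pair (D.act g) (D.act h) 1

theorem act_smul_eq_zero_iff (g : G) {m : M} : D.act g • m = 0 ↔ m = 0 := by
  rw [← D.toGroup_eq_one_iff, toGroup_act_smul, conj_eq_one_iff, toGroup_eq_one_iff]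

theorem mul_pow_pow_eq_one_iff [Fact p.Prime] (D : CommutatorModule G R M)
    (hsemi : ∀ a b : G, (a * b) ^ p = 1 ↔ a ^ p * b ^ p = 1) (a b : G) :
    ((a * b) ^ p) ^ p = 1 ↔ (a ^ p * b ^ p) ^ p = 1 := by
  constructor
  · intro hz
    obtain ⟨m, hm, hmul⟩ := D.exists_mul_pow_eq hsemi (g := a⁻¹) (h := a * b) hz
      (fun m hm => D.act_pow_smul hsemi _ hm)
      (fun r hr => by
        rwa [comm_pow_right, smul_comm, D.geom_sum_smul_eq_zero_iff hsemi] at hr)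
      (fun r _ => by rw [comm_pow_right, comm_self, smul_zero, smul_zero])
    rw [inv_mul_cancel_left, inv_pow] at hmul
    rw [hmul, ← mul_assoc, ← mul_assoc, ← toGroup_act_smul, hsemi, hz, mul_one,
      toGroup_pow_eq_one_iff, nsmul_smul_eq_zero hm]
  · intro hz
    obtain ⟨m, hm, hmul⟩ := D.exists_mul_pow_eq hsemi (g := a) (h := b) hz
      (fun m hm => by
        rw [map_mul, mul_smul, D.act_pow_smul hsemi _ hm, D.act_pow_smul hsemi _ hm])
      (fun r hr => by
        rw [comm_mul_right, comm_pow_right, comm_pow_right, comm_self, smul_zero, add_zero,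
          smul_comm, smul_comm r, act_smul_eq_zero_iff, D.geom_sum_smul_eq_zero_iff hsemi]
          at hr
        exact hr)
      (fun r hr => by
        rw [comm_mul_right, comm_pow_right, comm_pow_right, comm_self, smul_zero, smul_zero,
          zero_add, comm_swap, smul_neg, smul_neg, neg_eq_zero, smul_comm,
          D.geom_sum_smul_eq_zero_iff hsemi]
        exact hr)
    rw [hmul, hsemi, hz, mul_one, toGroup_pow_eq_one_iff, hm]

end CommutatorModule

section Metabelian

universe u

variable {G : Type u} [Group G]

/-- The conjugation action on the commutator subgroup of a metabelian group factors through the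
abelianization. -/
theorem exists_commutatorModule (hmeta : ∀ x y : ↥(commutator G), x * y = y * x) :
    ∃ (M : Type u) (_ : AddCommGroup M) (_ : Module (MonoidAlgebra ℤ (Abelianization G)) M),
      Nonempty (CommutatorModule G (MonoidAlgebra ℤ (Abelianization G)) M) := by
  let _ : CommGroup ↥(commutator G) := { (inferInstance : Group ↥(commutator G)) with
    mul_comm := hmeta }
  let conj : G →* Module.End ℤ (Additive ↥(commutator G)) :=
    { toFun := fun g => (MonoidHom.toAdditive (MulAut.conjNormal g).toMonoidHom).toIntLinearMap
      map_one' := by ext; simp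
      map_mul' := fun g h => by ext; simp [mul_assoc] }
  let ρ : Abelianization G →* Module.End ℤ (Additive ↥(commutator G)) :=
    QuotientGroup.lift (commutator G) conj (by
      intro g hg
      ext x
      have h : g * (x.toMul : G) = (x.toMul : G) * g :=
        congrArg Subtype.val (hmeta ⟨g, hg⟩ x.toMul)
      simp [conj, h])
  let _ : Module (MonoidAlgebra ℤ (Abelianization G)) (Additive ↥(commutator G)) :=
    Module.compHom _ (MonoidAlgebra.lift ℤ _ _ ρ).toRingHom
  refine ⟨Additive ↥(commutator G), inferInstance, inferInstance, ⟨
    { act := (MonoidAlgebra.of ℤ (Abelianization G)).comp Abelianization.of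
      incl := (commutator G).subtype.comp (MulEquiv.multiplicativeAdditive _).toMonoidHom
      incl_injective := ?_
      incl_act_smul := ?_
      comm := fun g h => Additive.ofMul ⟨⁅g, h⁆, Subgroup.commutator_mem_commutator
        (Subgroup.mem_top g) (Subgroup.mem_top h)⟩
      incl_comm := fun g h => rfl }⟩⟩
  · exact Subtype.val_injective.comp (MulEquiv.injective _)
  · intro g m
    have h : MonoidAlgebra.of ℤ (Abelianization G) (Abelianization.of g) • m = conj g m := by
      change MonoidAlgebra.lift ℤ _ _ ρ _ m = _
      rw [MonoidAlgebra.lift_of]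
      rfl
    rw [MonoidHom.comp_apply, h]
    rfl

theorem mul_pow_prime_pow_eq_one_iff (p : ℕ) [Fact p.Prime] (i : ℕ) :
    ∀ (G : Type u) [Group G], (∀ x y : ↥(commutator G), x * y = y * x) →
      (∀ a b : G, (a * b) ^ p = 1 ↔ a ^ p * b ^ p = 1) →
      ∀ a b : G, (a * b) ^ (p ^ i) = 1 ↔ a ^ (p ^ i) * b ^ (p ^ i) = 1 := by
  induction i with
  | zero => simp
  | succ i ih =>
    intro G _ hmeta hsemi a b
    let Ω : Subgroup G :=
      { carrier := {x | x ^ p = 1}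
        one_mem' := one_pow p
        mul_mem' := fun {x y} hx hy => by
          rw [Set.mem_ofPred_eq] at hx hy ⊢
          rw [hsemi, hx, hy, one_mul]
        inv_mem' := fun {x} hx => by
          rw [Set.mem_ofPred_eq] at hx ⊢
          rw [inv_pow, hx, inv_one] }
    have hΩ : ∀ x : G, x ∈ Ω ↔ x ^ p = 1 := fun _ => Iff.rfl
    have : Ω.Normal := ⟨fun x hx g => by
      rw [hΩ] at hx ⊢
      rw [conj_pow, hx, mul_one, mul_inv_cancel]⟩
    have hmk : ∀ x : G, (x : G ⧸ Ω) = 1 ↔ x ^ p = 1 := fun x => by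
      rw [QuotientGroup.eq_one_iff, hΩ]
    have hcomm : commutator (G ⧸ Ω) = (commutator G).map (QuotientGroup.mk' Ω) := by
      rw [commutator_def, commutator_def, Subgroup.map_commutator,
        Subgroup.map_top_of_surjective _ (QuotientGroup.mk'_surjective Ω)]
    obtain ⟨M, _, _, ⟨D⟩⟩ := exists_commutatorModule hmeta
    have key := ih (G ⧸ Ω) ?_ ?_ a b
    · rw [← QuotientGroup.mk_mul, ← QuotientGroup.mk_pow, ← QuotientGroup.mk_pow,
        ← QuotientGroup.mk_pow, ← QuotientGroup.mk_mul, hmk, hmk, hsemi] at key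
      simpa only [pow_succ, pow_mul] using key
    · rintro ⟨x, hx⟩ ⟨y, hy⟩
      obtain ⟨x, hxG, rfl⟩ := hcomm.le hx
      obtain ⟨y, hyG, rfl⟩ := hcomm.le hy
      have h := congrArg Subtype.val (hmeta ⟨x, hxG⟩ ⟨y, hyG⟩)
      exact Subtype.ext (congrArg (QuotientGroup.mk' Ω) h)
    · intro x y
      induction x using QuotientGroup.induction_on with | H x =>
      induction y using QuotientGroup.induction_on with | H y =>
      rw [← QuotientGroup.mk_mul, ← QuotientGroup.mk_pow, ← QuotientGroup.mk_pow,
        ← QuotientGroup.mk_pow, ← QuotientGroup.mk_mul, hmk, hmk]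
      exact D.mul_pow_pow_eq_one_iff hsemi x y

end Metabelian

/-- A finite metabelian semi-p-abelian p-group is strongly semi-p-abelian,
i.e. semi-`p^i`-abelian for every `i ≥ 1`. -/
theorem metabelian_semipabelian_strongly (p : ℕ) [Fact p.Prime]
    (G : Type*) [Group G] [Finite G] (hG : IsPGroup p G)
    (hmeta : ∀ x y : ↥(commutator G), x * y = y * x)
    (hsemi : ∀ a b : G, (a * b) ^ p = 1 ↔ a ^ p * b ^ p = 1) :
    ∀ i : ℕ, 1 ≤ i →
      ∀ a b : G, (a * b) ^ (p ^ i) = 1 ↔ a ^ (p ^ i) * b ^ (p ^ i) = 1 := by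
  intro i _
  exact mul_pow_prime_pow_eq_one_iff p i G hmeta hsemi
end

section
/- Let p be a prime, i ≥ 1, and let G be a finite p-group which is semi-p^i-abelian. Then for all a, b ∈ G, the commutator [a^(p^i), b] = 1 if and only if [a, b]^(p^i) = 1. -/
/-- In a finite semi-`p^i`-abelian p-group, `[a^(p^i), b] = 1` iff `[a,b]^(p^i) = 1`,
where `[x,y] = x⁻¹ * y⁻¹ * x * y`. -/
theorem semiPowAbelian_commutator_pow (p i : ℕ) [Fact p.Prime] (hi : 1 ≤ i)
    (G : Type*) [Group G] [Finite G] (hG : IsPGroup p G)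
    (hsemi : ∀ a b : G, (a * b) ^ (p ^ i) = 1 ↔ a ^ (p ^ i) * b ^ (p ^ i) = 1) :
    ∀ a b : G,
      (a ^ (p ^ i))⁻¹ * b⁻¹ * a ^ (p ^ i) * b = 1 ↔
        (a⁻¹ * b⁻¹ * a * b) ^ (p ^ i) = 1 := by
  intro a b
  have h := hsemi a⁻¹ (b⁻¹ * a * b)
  have hconj : (b⁻¹ * a * b) ^ (p ^ i) = b⁻¹ * a ^ (p ^ i) * b := by
    simpa using conj_pow (i := p ^ i) (a := b⁻¹) (b := a)
  rw [hconj, inv_pow] at h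
  simpa only [mul_assoc] using h.symm
end

section
/- Let p be a prime. Suppose that every finite metabelian p-group which is semi-p-abelian is also semi-p²-abelian. Then every finite metabelian p-group which is semi-p-abelian is strongly semi-p-abelian, i.e., semi-p^i-abelian for every i ≥ 1. -/
universe u

/-- The subgroup of elements with trivial `p`-th power in a semi-`p`-abelian group. -/
def powTorsion {G : Type u} [Group G] (p : ℕ)
    (h : ∀ a b : G, (a * b) ^ p = 1 ↔ a ^ p * b ^ p = 1) : Subgroup G where
  carrier := {x | x ^ p = 1}
  one_mem' := one_pow p
  mul_mem' {a b} ha hb := (h a b).2 <| by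
    rw [Set.mem_ofPred_eq] at ha hb
    rw [ha, hb, one_mul]
  inv_mem' {a} ha := by
    rw [Set.mem_ofPred_eq] at ha ⊢
    rw [inv_pow, ha, inv_one]

lemma mem_powTorsion {G : Type u} [Group G] {p : ℕ}
    (h : ∀ a b : G, (a * b) ^ p = 1 ↔ a ^ p * b ^ p = 1) {x : G} :
    x ∈ powTorsion p h ↔ x ^ p = 1 := Iff.rfl

instance powTorsion_normal {G : Type u} [Group G] (p : ℕ)
    (h : ∀ a b : G, (a * b) ^ p = 1 ↔ a ^ p * b ^ p = 1) : (powTorsion p h).Normal where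
  conj_mem x hx g := by
    rw [mem_powTorsion] at hx ⊢
    rw [conj_pow, hx, mul_one, mul_inv_cancel]

/-- For a semi-`p`-abelian group `G`, being semi-`n * p`-abelian amounts to its quotient by the
elements of trivial `p`-th power being semi-`n`-abelian. -/
lemma quotient_powTorsion_semi_iff {G : Type u} [Group G] {p : ℕ}
    (h : ∀ a b : G, (a * b) ^ p = 1 ↔ a ^ p * b ^ p = 1) (n : ℕ) :
    (∀ a b : G ⧸ powTorsion p h, (a * b) ^ n = 1 ↔ a ^ n * b ^ n = 1) ↔
      ∀ a b : G, (a * b) ^ (n * p) = 1 ↔ a ^ (n * p) * b ^ (n * p) = 1 := by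
  rw [QuotientGroup.mk_surjective.forall₂]
  refine forall₂_congr fun a b => ?_
  simp only [← QuotientGroup.mk_mul, ← QuotientGroup.mk_pow, QuotientGroup.eq_one_iff,
    mem_powTorsion, pow_mul, h (a ^ n) (b ^ n)]

/-- Quotients of metabelian groups are metabelian. -/
lemma commutator_quotient_comm {G : Type u} [Group G] (N : Subgroup G) [N.Normal]
    (h : ∀ x y : ↥(commutator G), x * y = y * x) :
    ∀ x y : ↥(commutator (G ⧸ N)), x * y = y * x := by
  have hmap : commutator (G ⧸ N) = (commutator G).map (QuotientGroup.mk' N) := by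
    rw [commutator_def, commutator_def, Subgroup.map_commutator,
      Subgroup.map_top_of_surjective _ (QuotientGroup.mk'_surjective N)]
  rintro ⟨x, hx⟩ ⟨y, hy⟩
  rw [hmap] at hx hy
  obtain ⟨a, ha, rfl⟩ := hx
  obtain ⟨b, hb, rfl⟩ := hy
  have hab : a * b = b * a := congrArg Subtype.val (h ⟨a, ha⟩ ⟨b, hb⟩)
  exact Subtype.ext (by simp only [Subgroup.coe_mul, ← map_mul, hab])

/-- If every finite metabelian semi-p-abelian p-group is semi-`p²`-abelian, then every
finite metabelian semi-p-abelian p-group is strongly semi-p-abelian. -/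
theorem metabelian_semi_p2_implies_strongly (p : ℕ) [Fact p.Prime]
    (hyp : ∀ (G : Type u) [Group G] [Finite G], IsPGroup p G →
      (∀ x y : ↥(commutator G), x * y = y * x) →
      (∀ a b : G, (a * b) ^ p = 1 ↔ a ^ p * b ^ p = 1) →
      (∀ a b : G, (a * b) ^ (p ^ 2) = 1 ↔ a ^ (p ^ 2) * b ^ (p ^ 2) = 1)) :
    ∀ (G : Type u) [Group G] [Finite G], IsPGroup p G →
      (∀ x y : ↥(commutator G), x * y = y * x) →
      (∀ a b : G, (a * b) ^ p = 1 ↔ a ^ p * b ^ p = 1) →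
      ∀ i : ℕ, 1 ≤ i →
        ∀ a b : G, (a * b) ^ (p ^ i) = 1 ↔ a ^ (p ^ i) * b ^ (p ^ i) = 1 := by
  intro G _ _ hG hcomm h i hi
  induction i, hi using Nat.le_induction generalizing G with
  | base => simpa only [pow_one] using h
  | succ i _ ih =>
    rw [pow_succ, ← quotient_powTorsion_semi_iff h]
    refine ih _ (hG.to_quotient _) (commutator_quotient_comm _ hcomm) ?_
    rw [quotient_powTorsion_semi_iff h, ← sq]
    exact hyp G hG hcomm h
end

section
/- Let p be a prime and let G be a finite p-group which is semi-p-abelian, not semi-p²-abelian, and such that every proper subgroup of G is semi-p²-abelian. Then the exponent of the derived subgroup G' divides p², the subgroup ℧₂(G) is contained in the center Z(G), and the subgroup ℧₁(G) is abelian. -/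
open scoped commutatorElement

section

variable {G : Type*} [Group G]

/-- If the pair `a, y a⁻¹ y⁻¹` satisfies the semi-`n`-abelian condition, then `⁅a, y⁆ ^ n = 1`
if and only if `a ^ n` commutes with `y`. -/
theorem commutatorElement_pow_eq_one_iff {n : ℕ} {a y : G}
    (h : (a * (y * a⁻¹ * y⁻¹)) ^ n = 1 ↔ a ^ n * (y * a⁻¹ * y⁻¹) ^ n = 1) :
    ⁅a, y⁆ ^ n = 1 ↔ Commute (a ^ n) y := by
  rw [commutatorElement_def, show a * y * a⁻¹ * y⁻¹ = a * (y * a⁻¹ * y⁻¹) by group, h, conj_pow,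
    inv_pow, ← commutatorElement_eq_one_iff_commute, commutatorElement_def]
  simp only [mul_assoc]

/-- In a finite nilpotent non-cyclic group, an element and its conjugates lie in a common proper
subgroup. -/
theorem exists_normal_ne_top_of_mem [Finite G] [Group.IsNilpotent G] (hc : ¬ IsCyclic G) (a : G) :
    ∃ M : Subgroup G, M ≠ ⊤ ∧ M.Normal ∧ a ∈ M := by
  rcases eq_top_or_exists_le_coatom (Subgroup.zpowers a) with h | ⟨M, hM, hle⟩
  · exact absurd ⟨a, fun x ↦ Subgroup.mem_zpowers_iff.1 (h ▸ Subgroup.mem_top x)⟩ hc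
  · exact ⟨M, hM.1, Subgroup.NormalizerCondition.normal_of_coatom M
      Group.normalizerCondition_of_isNilpotent hM, hle (Subgroup.mem_zpowers a)⟩

/-- A normal subgroup containing the commutator of two generators contains the derived
subgroup. -/
theorem commutator_le_of_closure_pair {a b : G} (hab : Subgroup.closure {a, b} = ⊤)
    {N : Subgroup G} [N.Normal] (h : ⁅a, b⁆ ∈ N) : commutator G ≤ N := by
  have hcomm : Commute (a : G ⧸ N) (b : G ⧸ N) := by
    rw [← commutatorElement_eq_one_iff_commute]
    exact (QuotientGroup.eq_one_iff _).2 h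
  have hmem : ∀ z : G, (a : G ⧸ N) * z = z * a ∧ (b : G ⧸ N) * z = z * b := by
    intro z
    have hz : z ∈ (Subgroup.centralizer {(a : G ⧸ N), (b : G ⧸ N)}).comap
        (QuotientGroup.mk' N) := by
      refine (Subgroup.closure_le _).2 ?_ (hab ▸ Subgroup.mem_top z)
      rintro x (rfl | rfl) <;>
        simp [Subgroup.mem_centralizer_iff, hcomm.eq]
    simpa [Subgroup.mem_centralizer_iff] using hz
  rw [commutator_def, Subgroup.commutator_le]
  intro x _ y _
  have hx : x ∈ (Subgroup.centralizer {(y : G ⧸ N)}).comap (QuotientGroup.mk' N) := by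
    refine (Subgroup.closure_le _).2 ?_ (hab ▸ Subgroup.mem_top x)
    rintro w (rfl | rfl)
    · simpa [Subgroup.mem_centralizer_iff] using (hmem y).1.symm
    · simpa [Subgroup.mem_centralizer_iff] using (hmem y).2.symm
  have hxy : Commute (x : G ⧸ N) (y : G ⧸ N) := by
    simpa [Subgroup.mem_centralizer_iff, commute_iff_eq, eq_comm] using hx
  rw [← QuotientGroup.eq_one_iff]
  exact commutatorElement_eq_one_iff_commute.2 hxy

/-- In a finite nilpotent group all of whose proper subgroups are semi-`n`-abelian, but which is
itself not semi-`n`-abelian, the elements of the derived subgroup have order dividing `n`, and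
`n`-th powers are central. -/
theorem commutator_pow_eq_one_and_commute_pow [Finite G] [Group.IsNilpotent G] {n : ℕ}
    (hnot : ¬ ∀ a b : G, (a * b) ^ n = 1 ↔ a ^ n * b ^ n = 1)
    (hproper : ∀ H : Subgroup G, H ≠ ⊤ →
      ∀ a b : H, (a * b) ^ n = 1 ↔ a ^ n * b ^ n = 1) :
    (∀ x ∈ commutator G, x ^ n = 1) ∧ ∀ x y : G, Commute (x ^ n) y := by
  have hprop : ∀ H : Subgroup G, H ≠ ⊤ → ∀ a ∈ H, ∀ b ∈ H,
      ((a * b) ^ n = 1 ↔ a ^ n * b ^ n = 1) := fun H hH a ha b hb ↦ by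
    simpa [Subtype.ext_iff] using hproper H hH ⟨a, ha⟩ ⟨b, hb⟩
  have hcyc : ¬ IsCyclic G := fun hc ↦ hnot fun a b ↦ by
    let := IsCyclic.commGroup (α := G)
    rw [(Commute.all a b).mul_pow]
  have hiff : ∀ a y : G, ⁅a, y⁆ ^ n = 1 ↔ Commute (a ^ n) y := fun a y ↦ by
    obtain ⟨M, hM, hMn, ha⟩ := exists_normal_ne_top_of_mem hcyc a
    exact commutatorElement_pow_eq_one_iff
      (hprop M hM a ha _ (hMn.conj_mem _ (inv_mem ha) y))
  have : Nontrivial G := by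
    by_contra h
    rw [not_nontrivial_iff_subsingleton] at h
    exact hcyc inferInstance
  have hder : commutator G ≠ ⊤ := (Group.IsSolvable.commutator_lt_top_of_nontrivial G).ne
  push Not at hnot
  obtain ⟨a, b, hbad⟩ := hnot
  have hgen : Subgroup.closure {a, b} = ⊤ := by
    by_contra hne
    have := hprop _ hne a (Subgroup.subset_closure (by simp)) b (Subgroup.subset_closure (by simp))
    tauto
  have hcommute : ⁅a, b⁆ ^ n = 1 := by
    rcases hbad with ⟨h, -⟩ | ⟨-, h⟩
    · have hc := (hiff (a * b) b).2 (h ▸ Commute.one_left b)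
      rwa [show ⁅a * b, b⁆ = ⁅a, b⁆ by simp [commutatorElement_def, mul_assoc]] at hc
    · rw [hiff, eq_inv_of_mul_eq_one_left h]
      exact ((Commute.refl b).pow_left n).inv_left
  let N : Subgroup G :=
    { carrier := {x | x ∈ commutator G ∧ x ^ n = 1}
      one_mem' := ⟨one_mem _, one_pow n⟩
      mul_mem' := fun {x y} hx hy ↦ ⟨mul_mem hx.1 hy.1,
        (hprop _ hder x hx.1 y hy.1).2 (by rw [hx.2, hy.2, one_mul])⟩
      inv_mem' := fun {x} hx ↦ ⟨inv_mem hx.1, by rw [inv_pow, hx.2, inv_one]⟩ }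
  have : N.Normal := ⟨fun x hx g ↦
    ⟨Subgroup.Normal.conj_mem inferInstance x hx.1 g, by rw [conj_pow, hx.2]; group⟩⟩
  have hmem (x y : G) : ⁅x, y⁆ ∈ commutator G :=
    Subgroup.commutator_mem_commutator (Subgroup.mem_top x) (Subgroup.mem_top y)
  have hle : commutator G ≤ N :=
    commutator_le_of_closure_pair hgen ⟨hmem a b, hcommute⟩
  exact ⟨fun x hx ↦ (hle hx).2, fun x y ↦ (hiff x y).1 (hle (hmem x y)).2⟩

end


/-- For a finite p-group which is semi-p-abelian, not semi-`p²`-abelian, and all of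
whose proper subgroups are semi-`p²`-abelian: the exponent of the derived subgroup
divides `p²`, `℧₂(G) ≤ Z(G)`, and `℧₁(G)` is abelian. -/
theorem inner_semi_p2_structure (p : ℕ) [Fact p.Prime]
    (G : Type*) [Group G] [Finite G] (hG : IsPGroup p G)
    (h1 : ∀ a b : G, (a * b) ^ p = 1 ↔ a ^ p * b ^ p = 1)
    (h2 : ¬ (∀ a b : G, (a * b) ^ (p ^ 2) = 1 ↔ a ^ (p ^ 2) * b ^ (p ^ 2) = 1))
    (hproper : ∀ H : Subgroup G, H ≠ ⊤ →
      ∀ a b : H, (a * b) ^ (p ^ 2) = 1 ↔ a ^ (p ^ 2) * b ^ (p ^ 2) = 1) :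
    Monoid.exponent ↥(commutator G) ∣ p ^ 2 ∧
    Subgroup.closure {x : G | ∃ g : G, g ^ (p ^ 2) = x} ≤ Subgroup.center G ∧
    ∀ x y : ↥(Subgroup.closure {x : G | ∃ g : G, g ^ p = x}), x * y = y * x := by
  have : Group.IsNilpotent G := hG.isNilpotent
  obtain ⟨hder, hpow⟩ := commutator_pow_eq_one_and_commute_pow h2 hproper
  have hiff (a y : G) : ⁅a, y⁆ ^ p = 1 ↔ Commute (a ^ p) y :=
    commutatorElement_pow_eq_one_iff (h1 _ _)
  have hpp (x y : G) : Commute (x ^ p) (y ^ p) := by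
    have h : ⁅x ^ p, y⁆ ^ p = 1 := (hiff _ _).2 (by rw [← pow_mul, ← sq]; exact hpow x y)
    rw [← commutatorElement_inv, inv_pow, inv_eq_one] at h
    exact ((hiff _ _).1 h).symm
  refine ⟨Monoid.exponent_dvd_of_forall_pow_eq_one fun x ↦ Subtype.ext (hder x x.2), ?_, ?_⟩
  · rw [Subgroup.closure_le]
    rintro _ ⟨g, rfl⟩
    exact Subgroup.mem_center_iff.2 fun y ↦ (hpow g y).eq.symm
  · have hcomm := Subgroup.isMulCommutative_closure (k := {x : G | ∃ g : G, g ^ p = x}) (by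
      rintro _ ⟨x, rfl⟩ _ ⟨y, rfl⟩
      exact (hpp x y).eq)
    exact hcomm.is_comm.comm
end

section
/- Let G be a finite 3-group which is semi-3-abelian and let x ∈ Ω₁(G). Then for all a, b ∈ G, [x,b,a] · [x,a,b] = 1, i.e., [[x,b],a] = ([[x,a],b])⁻¹. -/
/-- The commutator `[x,y] = x⁻¹ * y⁻¹ * x * y`. -/
def commElt {G : Type*} [Group G] (x y : G) : G := x⁻¹ * y⁻¹ * x * y

/-- In characteristic 3, if `g`, `h` and `g * h` are all roots of `X² + X + 1 = (X - 1)²`, then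
`g - 1` and `h - 1` anticommute. -/
theorem sub_one_mul_sub_one_add_swap_eq_zero {R : Type*} [Ring R] (h3 : (3 : R) = 0) {g h : R}
    (hg : g * g + g + 1 = 0) (hh : h * h + h + 1 = 0)
    (hgh : g * h * (g * h) + g * h + 1 = 0) :
    (g - 1) * (h - 1) + (h - 1) * (g - 1) = 0 := by
  have three_mul_eq_zero (r : R) : 3 * r = 0 := by rw [h3, zero_mul]
  obtain ⟨A, rfl⟩ : ∃ A, g = A + 1 := ⟨g - 1, by simp⟩
  obtain ⟨B, rfl⟩ : ∃ B, h = B + 1 := ⟨h - 1, by simp⟩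
  simp only [add_sub_cancel_right]
  have hA : A * A = 0 := by
    have expand : (A + 1) * (A + 1) + (A + 1) + 1 = A * A + 3 * A + 3 * 1 := by noncomm_ring
    simpa [expand, three_mul_eq_zero] using hg
  have hB : B * B = 0 := by
    have expand : (B + 1) * (B + 1) + (B + 1) + 1 = B * B + 3 * B + 3 * 1 := by noncomm_ring
    simpa [expand, three_mul_eq_zero] using hh
  have hAB : A * B + B * A + A * B * A + B * A * B + A * B * A * B = 0 := by
    have hAAB : A * A * B = 0 := by rw [hA, zero_mul]
    have hABB : A * (B * B) = 0 := by rw [hB, mul_zero]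
    have expand : (A + 1) * (B + 1) * ((A + 1) * (B + 1)) + (A + 1) * (B + 1) + 1 =
        A * B + B * A + A * B * A + B * A * B + A * B * A * B + A * A + B * B + A * A * B
          + A * (B * B) + 3 * (A * B) + 3 * A + 3 * B + 3 * 1 := by noncomm_ring
    rw [expand, hAAB, hABB, hA, hB, h3] at hgh
    simpa using hgh
  have hABA_mul : A * B * A + A * B * A * B = 0 := by
    have := congrArg (A * ·) hAB
    simpa [mul_add, ← mul_assoc, hA] using this
  have hABAB : A * B * A * B = 0 := by
    have := congrArg (· * B) hABA_mul
    simpa [add_mul, mul_assoc, hB] using this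
  have hABA : A * B * A = 0 := by simpa [hABAB] using hABA_mul
  have hBAB : B * A * B = 0 := by
    have := congrArg (B * ·) hAB
    have hBABA : B * A * B * A = 0 := by rw [mul_assoc, mul_assoc, ← mul_assoc A, hABA, mul_zero]
    simpa [mul_add, ← mul_assoc, hB, hBABA] using this
  simpa [hABAB, hABA, hBAB] using hAB

section SemiThreeAbelian

open scoped IsMulCommutative

variable {G : Type*} [Group G]

theorem pow_three_eq_one_of_mem_closure
    (hsemi : ∀ a b : G, (a * b) ^ 3 = 1 ↔ a ^ 3 * b ^ 3 = 1) {x : G}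
    (hx : x ∈ Subgroup.closure {g : G | g ^ 3 = 1}) : x ^ 3 = 1 := by
  induction hx using Subgroup.closure_induction with
  | mem y hy => exact hy
  | one => simp
  | mul y z _ _ hy hz => rw [hsemi, hy, hz, one_mul]
  | inv y _ hy => rw [inv_pow, hy, inv_one]

theorem mul_conj_mul_conj_eq_one
    (hsemi : ∀ a b : G, (a * b) ^ 3 = 1 ↔ a ^ 3 * b ^ 3 = 1) {x : G} (hx : x ^ 3 = 1) (a : G) :
    x * (a * x * a⁻¹) * (a * (a * x * a⁻¹) * a⁻¹) = 1 := by
  have hcube : (x * a) ^ 3 * a⁻¹ ^ 3 = 1 := by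
    rw [← hsemi, mul_inv_cancel_right, hx]
  rw [← hcube, pow_three, pow_three]
  group

theorem commute_conj (hsemi : ∀ a b : G, (a * b) ^ 3 = 1 ↔ a ^ 3 * b ^ 3 = 1) {x : G}
    (hx : x ^ 3 = 1) (a : G) : Commute x (a * x * a⁻¹) := by
  have hrot : a * (a * x * a⁻¹) * a⁻¹ * (x * (a * x * a⁻¹)) = 1 :=
    mul_eq_one_comm.mp (mul_conj_mul_conj_eq_one hsemi hx a)
  have hinv := mul_conj_mul_conj_eq_one hsemi hx a⁻¹
  have hswap : a * (a * x * a⁻¹) * a⁻¹ * (a * x * a⁻¹ * x) = 1 := by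
    calc _ = a * a * (x * (a⁻¹ * x * a⁻¹⁻¹) * (a⁻¹ * (a⁻¹ * x * a⁻¹⁻¹) * a⁻¹⁻¹)) * (a * a)⁻¹ := by
          group
      _ = 1 := by rw [hinv, mul_one, mul_inv_cancel]
  exact mul_left_cancel (hrot.trans hswap.symm)

theorem isMulCommutative_normalClosure_singleton
    (hsemi : ∀ a b : G, (a * b) ^ 3 = 1 ↔ a ^ 3 * b ^ 3 = 1) {x : G} (hx : x ^ 3 = 1) :
    IsMulCommutative (Subgroup.normalClosure {x}) := by
  refine Subgroup.isMulCommutative_closure fun y hy z hz => ?_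
  simp only [Group.mem_conjugatesOfSet_iff, Set.mem_singleton_iff, exists_eq_left,
    isConj_iff] at hy hz
  obtain ⟨c, rfl⟩ := hy
  obtain ⟨d, rfl⟩ := hz
  have hconj : d * x * d⁻¹ = (d * c⁻¹) * (c * x * c⁻¹) * (d * c⁻¹)⁻¹ := by group
  rw [hconj]
  refine commute_conj hsemi ?_ _
  rw [conj_pow, hx, mul_one, mul_inv_cancel]

/-- The conjugation action of a group on an abelian normal subgroup, by additive endomorphisms. -/
def conjEnd (N : Subgroup G) [N.Normal] [IsMulCommutative N] (g : G) :
    AddMonoid.End (Additive N) :=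
  MonoidHom.toAdditive (MulAut.conjNormal g : MulAut N).toMonoidHom

theorem coe_conjEnd_apply (N : Subgroup G) [N.Normal] [IsMulCommutative N] (g : G)
    (n : Additive N) : ((conjEnd N g n).toMul : G) = g * n.toMul * g⁻¹ := rfl

theorem conjEnd_mul (N : Subgroup G) [N.Normal] [IsMulCommutative N] (g h : G) :
    conjEnd N (g * h) = conjEnd N g * conjEnd N h := by
  ext n
  simp [coe_conjEnd_apply, mul_assoc]

theorem conjEnd_sq_add_self_add_one
    (hsemi : ∀ a b : G, (a * b) ^ 3 = 1 ↔ a ^ 3 * b ^ 3 = 1)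
    (N : Subgroup G) [N.Normal] [IsMulCommutative N] (hN : ∀ n ∈ N, n ^ 3 = 1) (g : G) :
    conjEnd N g * conjEnd N g + conjEnd N g + 1 = 0 := by
  have : 1 + conjEnd N g + conjEnd N g * conjEnd N g = 0 := by
    ext n
    exact mul_conj_mul_conj_eq_one hsemi (hN _ n.toMul.2) g
  rw [← this]
  abel

theorem commElt_mul_commElt_swap_eq_one
    (hsemi : ∀ a b : G, (a * b) ^ 3 = 1 ↔ a ^ 3 * b ^ 3 = 1)
    (N : Subgroup G) [N.Normal] [IsMulCommutative N] (hN : ∀ n ∈ N, n ^ 3 = 1)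
    {x : G} (hx : x ∈ N) (a b : G) :
    commElt (commElt x b) a * commElt (commElt x a) b = 1 := by
  have h3 : (3 : AddMonoid.End (Additive N)) = 0 := by
    ext n
    have hn : n.toMul ^ 3 = 1 := Subtype.ext (hN _ n.toMul.2)
    exact congrArg Subtype.val hn
  have hmul := conjEnd_sq_add_self_add_one hsemi N hN (a⁻¹ * b⁻¹)
  rw [conjEnd_mul] at hmul
  have hanti := sub_one_mul_sub_one_add_swap_eq_zero h3
    (conjEnd_sq_add_self_add_one hsemi N hN a⁻¹) (conjEnd_sq_add_self_add_one hsemi N hN b⁻¹) hmul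
  have coe_commElt (g : G) (n : Additive N) :
      (((conjEnd N g⁻¹ - 1) n).toMul : G) = commElt (n.toMul : G) g := by
    have : (conjEnd N g⁻¹ - 1) n = -n + conjEnd N g⁻¹ n := by
      rw [neg_add_eq_sub]
      rfl
    rw [this, toMul_add, Subgroup.coe_mul, coe_conjEnd_apply]
    simp [commElt, mul_assoc]
  have happly := congrArg (fun f => ((f (Additive.ofMul ⟨x, hx⟩)).toMul : G)) hanti
  change (((conjEnd N a⁻¹ - 1) ((conjEnd N b⁻¹ - 1) (Additive.ofMul ⟨x, hx⟩))).toMul : G) *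
    (((conjEnd N b⁻¹ - 1) ((conjEnd N a⁻¹ - 1) (Additive.ofMul ⟨x, hx⟩))).toMul : G) = 1 at happly
  simpa only [coe_commElt, toMul_ofMul] using happly

end SemiThreeAbelian

/-- In a finite semi-3-abelian 3-group, for `x ∈ Ω₁(G)` and all `a b`,
`[x,b,a] * [x,a,b] = 1`. -/
theorem semi3abelian_omega1_comm (G : Type*) [Group G] [Finite G]
    (hG : IsPGroup 3 G)
    (hsemi : ∀ a b : G, (a * b) ^ 3 = 1 ↔ a ^ 3 * b ^ 3 = 1)
    (x : G) (hx : x ∈ Subgroup.closure {g : G | g ^ 3 = 1}) :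
    ∀ a b : G, commElt (commElt x b) a * commElt (commElt x a) b = 1 := by
  have hx3 := pow_three_eq_one_of_mem_closure hsemi hx
  have := isMulCommutative_normalClosure_singleton hsemi hx3
  refine commElt_mul_commElt_swap_eq_one hsemi (Subgroup.normalClosure {x}) (fun n hn => ?_)
    (Subgroup.subset_normalClosure rfl)
  refine pow_three_eq_one_of_mem_closure hsemi (Subgroup.closure_mono ?_ hn)
  intro y hy
  simp only [Group.mem_conjugatesOfSet_iff, Set.mem_singleton_iff, exists_eq_left,
    isConj_iff] at hy
  obtain ⟨c, rfl⟩ := hy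
  rw [Set.mem_ofPred_eq, conj_pow, hx3, mul_one, mul_inv_cancel]
end

section
/- Let G be a finite 3-group which is semi-3-abelian, let x ∈ Ω₁(G), let k ≥ 1, let g₁, …, g_k ∈ G, and let σ be a permutation of {1, …, k}. Then the left-normed iterated commutator satisfies [x, g_{σ(1)}, g_{σ(2)}, …, g_{σ(k)}] = [x, g₁, g₂, …, g_k]^(2^δ(σ)), where δ(σ) = 0 if σ is an even permutation and δ(σ) = 1 if σ is odd. -/
/-- The left-normed iterated commutator `[x, g₁, …, g_k]` with
`[x,y] = x⁻¹ * y⁻¹ * x * y`. -/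
def commChain {G : Type*} [Group G] (x : G) (l : List G) : G :=
  l.foldl (fun y g => y⁻¹ * g⁻¹ * y * g) x

open scoped IsMulCommutative

section Ring

variable {R : Type*} [Ring R]

/-- If every `φ g - 1` squares to zero, then the elements `φ g - 1` anticommute. -/
theorem sub_one_mul_sub_one_eq_neg_of_sq_eq_zero {G : Type*} [Group G] (φ : G →* R)
    (hφ : ∀ g, (φ g - 1) * (φ g - 1) = 0) (g h : G) :
    (φ g - 1) * (φ h - 1) = -((φ h - 1) * (φ g - 1)) := by
  have key : ∀ a b : R, a * a = 0 → b * b = 0 →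
      (a + b + a * b) * (a + b + a * b) = 0 → a * b = -(b * a) := by
    intro a b ha hb hab
    have e : a * b + b * a + a * b * a + b * a * b + a * b * a * b = 0 := by
      calc _ = (a + b + a * b) * (a + b + a * b) - a * a - b * b - a * a * b - a * (b * b) := by
            noncomm_ring
        _ = 0 := by rw [hab, mul_assoc a a b]; simp [ha, hb, ← mul_assoc]
    have e₁ : a * b * a + a * b * a * b = 0 := by
      calc _ = a * (a * b + b * a + a * b * a + b * a * b + a * b * a * b)
            - (a * a) * (b + b * a + b * a * b) := by noncomm_ring
        _ = 0 := by rw [e, ha]; simp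
    have e₂ : a * b * a * b = 0 := by
      calc _ = (a * b * a + a * b * a * b) * b - a * b * a * (b * b) := by noncomm_ring
        _ = 0 := by rw [e₁, hb]; simp
    have e₃ : b * a * b + a * b * a * b = 0 := by
      calc _ = (a * b + b * a + a * b * a + b * a * b + a * b * a * b) * b
            - (a + b * a + a * b * a) * (b * b) := by noncomm_ring
        _ = 0 := by rw [e, hb]; simp
    rw [e₂, add_zero] at e₁ e₃
    rw [e₂, e₁, e₃] at e
    exact eq_neg_of_add_eq_zero_left (by simpa using e)
  refine key _ _ (hφ g) (hφ h) ?_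
  have : φ g - 1 + (φ h - 1) + (φ g - 1) * (φ h - 1) = φ (g * h) - 1 := by
    rw [map_mul]; noncomm_ring
  rw [this, hφ]

/-- In a ring of characteristic dividing three, permuting the factors of a product of
anticommuting elements multiplies it by the sign of the permutation. -/
theorem prod_ofFn_comp_perm_of_anticommute (h3 : (3 : R) = 0) {k : ℕ} (a : Fin k → R)
    (ha : ∀ i j, a i * a j = -(a j * a i)) (σ : Equiv.Perm (Fin k)) :
    (List.ofFn (a ∘ σ)).prod = Equiv.Perm.sign σ • (List.ofFn a).prod := by
  let f : (Fin k → ℤ) →ₗ[ℤ] R := Fintype.linearCombination ℤ a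
  have hf : ∀ v, f v * f v = 0 := by
    intro v
    have hneg : f v * f v = -(f v * f v) := by
      simp only [f, Fintype.linearCombination_apply, Finset.sum_mul_sum]
      conv_lhs => rw [Finset.sum_comm]
      simp only [← Finset.sum_neg_distrib]
      refine Finset.sum_congr rfl fun i _ => Finset.sum_congr rfl fun j _ => ?_
      rw [smul_mul_smul_comm, smul_mul_smul_comm, ha j i, smul_neg, mul_comm]
    calc f v * f v = 3 * (f v * f v) - (f v * f v + f v * f v) := by noncomm_ring
      _ = 0 := by rw [h3, eq_neg_iff_add_eq_zero.mp hneg]; simp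
  have hlift : ∀ τ : Equiv.Perm (Fin k), ExteriorAlgebra.lift ℤ ⟨f, hf⟩
      (ExteriorAlgebra.ιMulti ℤ k ((fun i => Pi.single i (1 : ℤ)) ∘ τ)) =
        (List.ofFn (a ∘ τ)).prod := by
    intro τ
    rw [ExteriorAlgebra.ιMulti_apply, map_list_prod, List.map_ofFn]
    congr 2
    funext i
    simp [f, Fintype.linearCombination_apply_single]
  have h1 := hlift 1
  rw [← hlift σ, AlternatingMap.map_perm, Units.smul_def, map_zsmul, ← Units.smul_def]
  simp only [Equiv.Perm.coe_one, Function.comp_id] at h1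
  rw [h1]

end Ring

section Conjugation

variable {G : Type*} [Group G] (N : Subgroup G) [N.Normal] [IsMulCommutative N]

/-- The right action of `G` by conjugation on an abelian normal subgroup, as a homomorphism to
the opposite of the endomorphism ring. -/
def conjEndOp : G →* (Module.End ℤ (Additive N))ᵐᵒᵖ where
  toFun g := .op (AddMonoidHom.toIntLinearMap
    (MonoidHom.toAdditive (MulAut.conjNormal (H := N) g⁻¹).toMonoidHom))
  map_one' := by
    apply MulOpposite.unop_injective
    ext y
    simp
  map_mul' g h := by
    apply MulOpposite.unop_injective
    ext y
    simp

theorem coe_conjEndOp_apply (g : G) (y : Additive N) :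
    (((conjEndOp N g).unop y).toMul : G) = g⁻¹ * (y.toMul : G) * g := by
  simp [conjEndOp]

theorem coe_conjEndOp_sub_one_apply (g : G) (y : Additive N) :
    (((conjEndOp N g - 1).unop y).toMul : G) =
      (y.toMul : G)⁻¹ * g⁻¹ * (y.toMul : G) * g := by
  rw [MulOpposite.unop_sub, LinearMap.sub_apply, sub_eq_neg_add, toMul_add, Subgroup.coe_mul,
    coe_conjEndOp_apply]
  simp [mul_assoc]

theorem coe_unop_prod_conjEndOp_sub_one_apply (l : List G) (y : Additive N) :
    ((((l.map fun g => conjEndOp N g - 1).prod.unop) y).toMul : G) =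
      commChain (y.toMul : G) l := by
  induction l generalizing y with
  | nil => simp [commChain]
  | cons g l ih =>
    rw [List.map_cons, List.prod_cons, MulOpposite.unop_mul, Module.End.mul_apply, ih,
      coe_conjEndOp_sub_one_apply]
    rfl

end Conjugation

section SemiAbelian

variable {G : Type*} [Group G]

theorem mul_pow_three_of_pow_three_eq_one
    (hsemi : ∀ a b : G, (a * b) ^ 3 = 1 ↔ a ^ 3 * b ^ 3 = 1)
    {x : G} (hx : x ^ 3 = 1) (g : G) :
    (g * x) ^ 3 = g ^ 3 := by
  have h : (g * x * g⁻¹) ^ 3 = 1 := by rw [conj_pow, hx]; simp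
  rw [hsemi, inv_pow] at h
  exact mul_inv_eq_one.mp h

theorem conj_sq_mul_conj_mul_self
    (hsemi : ∀ a b : G, (a * b) ^ 3 = 1 ↔ a ^ 3 * b ^ 3 = 1)
    {x : G} (hx : x ^ 3 = 1) (g : G) :
    (g⁻¹ * (g⁻¹ * x * g) * g) * (g⁻¹ * x * g) * x = 1 := by
  have h := mul_pow_three_of_pow_three_eq_one hsemi hx g
  calc _ = (g ^ 3)⁻¹ * (g * x) ^ 3 := by simp only [pow_succ, pow_zero]; group
    _ = 1 := by rw [h, inv_mul_cancel]

theorem self_mul_conj_mul_conj_sq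
    (hsemi : ∀ a b : G, (a * b) ^ 3 = 1 ↔ a ^ 3 * b ^ 3 = 1)
    {x : G} (hx : x ^ 3 = 1) (g : G) :
    x * (g⁻¹ * x * g) * (g⁻¹ * (g⁻¹ * x * g) * g) = 1 := by
  have h := conj_sq_mul_conj_mul_self hsemi (x := x⁻¹) (by rw [inv_pow, hx, inv_one]) g
  rw [← inv_inj, inv_one, ← h]
  group

theorem commute_conj_self
    (hsemi : ∀ a b : G, (a * b) ^ 3 = 1 ↔ a ^ 3 * b ^ 3 = 1)
    {x : G} (hx : x ^ 3 = 1) (g : G) : Commute (g⁻¹ * x * g) x := by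
  have h₁ := conj_sq_mul_conj_mul_self hsemi hx g
  have h₂ := self_mul_conj_mul_conj_sq hsemi hx g
  rw [mul_assoc] at h₁
  exact (eq_inv_of_mul_eq_one_right h₁).trans (eq_inv_of_mul_eq_one_left h₂).symm

theorem conjEndOp_sub_one_mul_self
    (hsemi : ∀ a b : G, (a * b) ^ 3 = 1 ↔ a ^ 3 * b ^ 3 = 1)
    (N : Subgroup G) [N.Normal] [IsMulCommutative N]
    (hN : ∀ y ∈ N, y ^ 3 = 1) (g : G) :
    (conjEndOp N g - 1) * (conjEndOp N g - 1) = 0 := by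
  apply MulOpposite.unop_injective
  ext y
  have hcube := hN _ y.toMul.2
  have hcomm := commute_conj_self hsemi hcube g
  have hprod := self_mul_conj_mul_conj_sq hsemi hcube g
  rw [MulOpposite.unop_mul, Module.End.mul_apply, coe_conjEndOp_sub_one_apply,
    coe_conjEndOp_sub_one_apply]
  generalize (y.toMul : G) = x at *
  have hinv : (g⁻¹ * x * g)⁻¹ * (g⁻¹ * x * g)⁻¹ = g⁻¹ * x * g := by
    have : (g⁻¹ * x * g) ^ 3 = 1 := by
      simpa [hcube] using conj_pow (i := 3) (a := g⁻¹) (b := x)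
    rw [← mul_inv_rev, inv_eq_iff_mul_eq_one, ← this, pow_succ, sq]
  calc _ = (g⁻¹ * x * g)⁻¹ * x * (g⁻¹ * x * g)⁻¹ * (g⁻¹ * (g⁻¹ * x * g) * g) := by group
    _ = x * ((g⁻¹ * x * g)⁻¹ * (g⁻¹ * x * g)⁻¹) * (g⁻¹ * (g⁻¹ * x * g) * g) := by
      rw [hcomm.inv_left.eq, mul_assoc x]
    _ = 1 := by rw [hinv, hprod]

end SemiAbelian

/-- In a finite semi-3-abelian 3-group, for `x ∈ Ω₁(G)` and `g₁, …, g_k ∈ G`, permuting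
the entries of the left-normed commutator `[x, g₁, …, g_k]` by `σ` yields
`[x, g₁, …, g_k] ^ (2 ^ δ(σ))`, where `δ(σ) = 0` for even `σ` and `δ(σ) = 1` for odd `σ`. -/
theorem semi3abelian_commChain_perm (G : Type*) [Group G] [Finite G]
    (hG : IsPGroup 3 G)
    (hsemi : ∀ a b : G, (a * b) ^ 3 = 1 ↔ a ^ 3 * b ^ 3 = 1)
    (x : G) (hx : x ∈ Subgroup.closure {g : G | g ^ 3 = 1})
    (k : ℕ) (hk : 1 ≤ k) (g : Fin k → G) (σ : Equiv.Perm (Fin k)) :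
    commChain x (List.ofFn (g ∘ σ)) =
      (commChain x (List.ofFn g)) ^ (2 ^ (if Equiv.Perm.sign σ = 1 then 0 else 1)) := by
  have hx3 := pow_three_eq_one_of_mem_closure hsemi hx
  let N := Subgroup.normalClosure {x}
  have hNcomm : IsMulCommutative N := isMulCommutative_normalClosure_singleton hsemi hx3
  have hN : ∀ y ∈ N, y ^ 3 = 1 := by
    intro y hy
    refine pow_three_eq_one_of_mem_closure hsemi (Subgroup.closure_mono ?_ hy)
    intro z hz
    simp only [Group.mem_conjugatesOfSet_iff, Set.mem_singleton_iff, exists_eq_left, isConj_iff] at hz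
    obtain ⟨a, rfl⟩ := hz
    simp [conj_pow, hx3]
  have h3 : (3 : (Module.End ℤ (Additive N))ᵐᵒᵖ) = 0 := by
    apply MulOpposite.unop_injective
    ext y
    simpa using hN _ y.toMul.2
  have hperm := prod_ofFn_comp_perm_of_anticommute h3 (fun i => conjEndOp N (g i) - 1)
    (fun i j => sub_one_mul_sub_one_eq_neg_of_sq_eq_zero _
      (conjEndOp_sub_one_mul_self hsemi N hN) (g i) (g j)) σ
  let y : Additive N := .ofMul ⟨x, Subgroup.subset_normalClosure rfl⟩
  have hchain : ∀ f : Fin k → G, commChain x (List.ofFn f) =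
      (((List.ofFn fun i => conjEndOp N (f i) - 1).prod.unop y).toMul : G) := by
    intro f
    have h := coe_unop_prod_conjEndOp_sub_one_apply N (List.ofFn f) y
    rw [List.map_ofFn] at h
    exact h.symm
  have hcube := hN _ ((List.ofFn fun i => conjEndOp N (g i) - 1).prod.unop y).toMul.2
  rw [← hchain] at hcube
  have hsq : commChain x (List.ofFn g) ^ 2 = (commChain x (List.ofFn g))⁻¹ :=
    eq_inv_of_mul_eq_one_left (by rw [← pow_succ, hcube])
  have hσ : commChain x (List.ofFn (g ∘ σ)) =
      (((List.ofFn ((fun i => conjEndOp N (g i) - 1) ∘ σ)).prod.unop y).toMul : G) := hchain _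
  rw [hσ, hperm]
  rcases Int.units_eq_one_or (Equiv.Perm.sign σ) with h | h
  · simp [h, hchain]
  · rw [h, if_neg (by decide), pow_one, hsq, hchain]
    simp
end

section
/- Let G be a finite 3-group which is semi-3-abelian, generated by elements a₁, …, a_n with |G/Φ(G)| = 3^n (where Φ(G) is the Frattini subgroup). Then Ω₁(G) ≤ Z_{n+1}(G), the (n+1)-st term of the upper central series of G. -/
section SemiThreeAbelian

open scoped commutatorElement

variable {G : Type*} [Group G]

/-- In a semi-3-abelian group, an element `v` with `v ^ 3 = 1` satisfies `v * vᵍ * vᵍᵍ = 1`. -/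
lemma mul_conj_mul_conj_conj_eq_one
    (hsemi : ∀ a b : G, (a * b) ^ 3 = 1 ↔ a ^ 3 * b ^ 3 = 1)
    {v : G} (hv : v ^ 3 = 1) (g : G) :
    v * (g * v * g⁻¹) * (g * (g * v * g⁻¹) * g⁻¹) = 1 := by
  have h : (v * g) ^ 3 * g⁻¹ ^ 3 = 1 := (hsemi _ _).1 (by simpa using hv)
  rw [← h]
  simp only [pow_succ, pow_zero, one_mul]
  group

/-- If `v` has exponent 3 and commutes with `x`, so do all commutators of `v`. -/
lemma commute_commutatorElement_of_commute
    (hsemi : ∀ a b : G, (a * b) ^ 3 = 1 ↔ a ^ 3 * b ^ 3 = 1)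
    {v : G} (hv : v ^ 3 = 1) {x : G} (hx : Commute v x) (y : G) :
    Commute ⁅v, y⁆ x := by
  have h₁ := mul_conj_mul_conj_conj_eq_one hsemi hv y
  have h₂ := mul_conj_mul_conj_conj_eq_one hsemi hv (y * x)
  have hxv : x * v * x⁻¹ = v := by rw [← hx.eq, mul_inv_cancel_right]
  have e : y * x * v * (y * x)⁻¹ = y * v * y⁻¹ := by
    conv_rhs => rw [← hxv]
    group
  rw [e, ← h₁] at h₂
  have h₃ : x * (y * v * y⁻¹) * x⁻¹ = y * v * y⁻¹ := by
    apply mul_left_cancel (a := y)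
    apply mul_right_cancel (b := y⁻¹)
    rw [← mul_left_cancel h₂]
    group
  have h₄ : Commute (y * v * y⁻¹) x := (mul_inv_eq_iff_eq_mul.1 h₃).symm
  have e' : ⁅v, y⁆ = v * (y * v * y⁻¹)⁻¹ := by rw [commutatorElement_def]; group
  rw [e']
  exact hx.mul_left h₄.inv_left

/-- In a semi-3-abelian group, `[v, y]` commutes with `y` whenever `v ^ 3 = 1`. -/
lemma commute_commutatorElement_self
    (hsemi : ∀ a b : G, (a * b) ^ 3 = 1 ↔ a ^ 3 * b ^ 3 = 1)
    {v : G} (hv : v ^ 3 = 1) (y : G) :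
    Commute ⁅v, y⁆ y := by
  have h₁ := mul_conj_mul_conj_conj_eq_one hsemi hv y
  have h₂ := mul_conj_mul_conj_conj_eq_one hsemi hv y⁻¹
  have hp : (y * v * y⁻¹) ^ 3 = 1 := by rw [conj_pow, hv]; group
  have h₃ : (y * (y * v * y⁻¹) * y⁻¹) * ((y * v * y⁻¹) * v) = 1 := by
    have := congrArg (fun t => y * (y * t * y⁻¹) * y⁻¹) h₂
    simp only [mul_one, mul_inv_cancel] at this
    rw [← this]
    group
  have e : ⁅v, y⁆ = v * (y * v * y⁻¹)⁻¹ := by rw [commutatorElement_def]; group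
  have e' : y * (v * (y * v * y⁻¹)⁻¹) * y⁻¹ =
      (y * v * y⁻¹) * (y * (y * v * y⁻¹) * y⁻¹)⁻¹ := by group
  have key : y * (v * (y * v * y⁻¹)⁻¹) * y⁻¹ = v * (y * v * y⁻¹)⁻¹ := by
    rw [e']
    generalize y * (y * v * y⁻¹) * y⁻¹ = q at *
    generalize y * v * y⁻¹ = p at *
    have hq : q⁻¹ = v * p := (eq_inv_of_mul_eq_one_left h₁).symm
    have hq' : q⁻¹ = p * v := inv_eq_of_mul_eq_one_right h₃
    have hp' : p⁻¹ = p * p := inv_eq_of_mul_eq_one_right (by rw [← hp, pow_succ', pow_two])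
    rw [hq, hp', ← mul_assoc, ← hq', hq, mul_assoc]
  rw [e]
  exact (mul_inv_eq_iff_eq_mul.1 key).symm

lemma commutatorElement_pow_three
    (hsemi : ∀ a b : G, (a * b) ^ 3 = 1 ↔ a ^ 3 * b ^ 3 = 1)
    {v : G} (hv : v ^ 3 = 1) (y : G) : ⁅v, y⁆ ^ 3 = 1 := by
  have e : ⁅v, y⁆ = v * (y * v⁻¹ * y⁻¹) := by rw [commutatorElement_def]; group
  rw [e, hsemi, conj_pow, inv_pow, hv]
  group

/-- Membership in the next term of the upper central series can be tested on generators. -/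
lemma mem_upperCentralSeries_succ_of_closure_eq_top {s : Set G} (hs : Subgroup.closure s = ⊤)
    {k : ℕ} {v : G} (h : ∀ y ∈ s, ⁅v, y⁆ ∈ Subgroup.upperCentralSeries G k) :
    v ∈ Subgroup.upperCentralSeries G (k + 1) := by
  rw [Subgroup.mem_upperCentralSeries_succ_iff]
  intro y
  have hy : y ∈ Subgroup.closure s := hs ▸ Subgroup.mem_top y
  induction hy using Subgroup.closure_induction with
  | mem y hy => exact h y hy
  | one => simp
  | mul y z _ _ hy hz =>
    have e : ⁅v, y * z⁆ =
        ⁅v, y⁆ * (y * ⁅v, z⁆ * y⁻¹) := by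
      simp only [commutatorElement_def]; group
    rw [e]
    exact mul_mem hy (Subgroup.Normal.conj_mem inferInstance _ hz y)
  | inv y _ hy =>
    have e : ⁅v, y⁻¹⁆ = y⁻¹ * ⁅v, y⁆⁻¹ * y⁻¹⁻¹ := by
      simp only [commutatorElement_def]; group
    rw [e]
    exact Subgroup.Normal.conj_mem inferInstance _ (inv_mem hy) y⁻¹

/-- An element of exponent 3 commuting with all but `m` of the generators of a semi-3-abelian
group lies in the `(m + 1)`-st term of the upper central series. -/
lemma mem_upperCentralSeries_of_commute
    (hsemi : ∀ a b : G, (a * b) ^ 3 = 1 ↔ a ^ 3 * b ^ 3 = 1)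
    {ι : Type*} {a : ι → G} (hgen : Subgroup.closure (Set.range a) = ⊤)
    (m : ℕ) (t : Finset ι) (ht : t.card = m) {v : G} (hv : v ^ 3 = 1)
    (hcomm : ∀ i ∉ t, Commute v (a i)) :
    v ∈ Subgroup.upperCentralSeries G (m + 1) := by
  classical
  induction m generalizing t v with
  | zero =>
    obtain rfl := Finset.card_eq_zero.1 ht
    refine mem_upperCentralSeries_succ_of_closure_eq_top hgen ?_
    rintro _ ⟨i, rfl⟩
    simp [commutatorElement_eq_one_iff_commute.2 (hcomm i (by simp))]
  | succ m ih =>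
    refine mem_upperCentralSeries_succ_of_closure_eq_top hgen ?_
    rintro _ ⟨j, rfl⟩
    by_cases hj : j ∈ t
    · refine ih (t.erase j) (by rw [Finset.card_erase_of_mem hj, ht]; rfl)
        (commutatorElement_pow_three hsemi hv _) fun i hi => ?_
      by_cases hij : i = j
      · subst hij
        exact commute_commutatorElement_self hsemi hv _
      · exact commute_commutatorElement_of_commute hsemi hv
          (hcomm i fun hit => hi (Finset.mem_erase.2 ⟨hij, hit⟩)) _
    · simp [commutatorElement_eq_one_iff_commute.2 (hcomm j hj)]

end SemiThreeAbelian

/-- In a finite semi-3-abelian 3-group generated by `n` elements `a₁, …, a_n` with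
`|G/Φ(G)| = 3^n`, one has `Ω₁(G) ≤ Z_{n+1}(G)`. -/
theorem semi3abelian_omega1_le_Z (G : Type*) [Group G] [Finite G]
    (hG : IsPGroup 3 G)
    (hsemi : ∀ a b : G, (a * b) ^ 3 = 1 ↔ a ^ 3 * b ^ 3 = 1)
    (n : ℕ) (a : Fin n → G) (hgen : Subgroup.closure (Set.range a) = ⊤)
    (hcard : Nat.card (G ⧸ frattini G) = 3 ^ n) :
    Subgroup.closure {g : G | g ^ 3 = 1} ≤ upperCentralSeries G (n + 1) := by
  rw [Subgroup.closure_le]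
  intro v hv
  exact mem_upperCentralSeries_of_commute hsemi hgen n Finset.univ (by simp) hv (by simp)
end

section
/- Let G be a finite 3-group which is semi-3-abelian, not semi-9-abelian, and such that every proper subgroup of G is semi-9-abelian. Suppose a, b ∈ G satisfy (ab)⁹ = 1 and a⁹b⁹ ≠ 1. Then [ab,b,b]³ = [ab,b,b,ab,ab] and [ab,b,b,ab,b] ∈ Z(G), the center of G. -/
/-- A group in which `(ab)³ = 1` if and only if `a³b³ = 1`. -/
def SemiCubeAbelian (G : Type*) [Group G] : Prop :=
  ∀ a b : G, (a * b) ^ 3 = 1 ↔ a ^ 3 * b ^ 3 = 1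

section Commutators

variable {G : Type*} [Group G]

theorem commElt_eq_one_iff {x y : G} : commElt x y = 1 ↔ Commute x y := by
  unfold commElt
  rw [mul_assoc, ← mul_inv_rev, inv_mul_eq_one, eq_comm]
  rfl

theorem conj_eq_mul_commElt (u g : G) : g⁻¹ * u * g = u * commElt u g := by
  unfold commElt; group

theorem commElt_eq_inv_mul_conj (u g : G) : commElt u g = u⁻¹ * (g⁻¹ * u * g) := by
  unfold commElt; group

theorem commElt_inv (u g : G) : (commElt u g)⁻¹ = commElt g u := by
  unfold commElt; group

theorem conj_inv_pow (u g : G) (n : ℕ) : (g⁻¹ * u * g) ^ n = g⁻¹ * u ^ n * g := by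
  simpa using conj_pow (i := n) (a := g⁻¹) (b := u)

theorem mul_commElt (f g x : G) :
    commElt (f * g) x = g⁻¹ * commElt f x * g * commElt g x := by
  unfold commElt; group

theorem mul_commElt_of_mem_center {f x : G} (h : commElt f x ∈ Subgroup.center G) (g : G) :
    commElt (f * g) x = commElt f x * commElt g x := by
  rw [mul_commElt, mul_assoc g⁻¹, ← Subgroup.mem_center_iff.1 h g, inv_mul_cancel_left]

theorem commElt_of_mem_center {z : G} (hz : z ∈ Subgroup.center G) (g : G) : commElt z g = 1 :=
  commElt_eq_one_iff.2 (Subgroup.mem_center_iff.1 hz g).symm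

/-- Comparison of the actions of `xb` and `bx[x,b]` by conjugation. -/
theorem commElt_swap (u x b : G) :
    commElt u b * (commElt u x * commElt (commElt u x) b) =
      commElt u (commElt x b) * ((commElt x b)⁻¹ * commElt u x * commElt x b) *
        ((commElt x b)⁻¹ * (commElt u b * commElt (commElt u b) x) * commElt x b) := by
  unfold commElt; group

theorem mem_center_of_commute_generators {x b u : G} (hgen : Subgroup.closure {x, b} = ⊤)
    (hx : Commute u x) (hb : Commute u b) : u ∈ Subgroup.center G := by
  have h : Subgroup.closure {x, b} ≤ Subgroup.centralizer {u} := by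
    rw [Subgroup.closure_le]
    rintro g (rfl | rfl)
    · exact Subgroup.mem_centralizer_singleton_iff.2 hx.symm.eq
    · exact Subgroup.mem_centralizer_singleton_iff.2 hb.symm.eq
  rw [hgen] at h
  refine Subgroup.mem_center_iff.2 fun g => ?_
  exact Subgroup.mem_centralizer_singleton_iff.1 (h (Subgroup.mem_top g))

/-- If operators `1 + A`, `1 + B` and their product act quadratically, then `A` and `B`
anticommute. -/
theorem anticomm_of_sq_eq_zero {R : Type*} [Ring R] {A B : R} (hA : A * A = 0) (hB : B * B = 0)
    (hAB : (A + B + B * A) * (A + B + B * A) = 0) :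
    A * B + B * A = 0 ∧ A * B * A = 0 ∧ B * A * B = 0 := by
  have expand : A * B + B * A + A * B * A + B * A * B + B * A * B * A = 0 := by
    have h : (A + B + B * A) * (A + B + B * A) =
        A * A + A * B + A * B * A + B * A + B * B + B * B * A + B * (A * A) + B * A * B
          + B * A * B * A := by noncomm_ring
    rw [h] at hAB
    simp only [hA, hB, zero_mul, mul_zero, zero_add, add_zero] at hAB
    rw [← hAB]; abel
  have hBAB : B * A * B + B * A * B * A = 0 := by
    have h : B * (A * B + B * A + A * B * A + B * A * B + B * A * B * A) =
        B * A * B + B * A * B * A + B * B * (A + A * B + A * B * A) := by noncomm_ring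
    rw [expand, hB] at h
    simpa using h.symm
  have hBAB' : B * A * B = 0 := by
    have h : (B * A * B + B * A * B * A) * (1 - A) = B * A * B - B * A * B * (A * A) := by
      noncomm_ring
    rw [hBAB, hA] at h
    simpa using h.symm
  have hsum : A * B + B * A + A * B * A = 0 := by
    simpa [hBAB'] using expand
  have hABA : A * B * A = 0 := by
    have h : (A * B + B * A + A * B * A) * A = A * B * A + (B + A * B) * (A * A) := by
      noncomm_ring
    rw [hsum, hA] at h
    simpa using h.symm
  exact ⟨by simpa [hABA] using hsum, hABA, hBAB'⟩

/-- The action of a commutator when the generators anticommute in characteristic three. -/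
theorem commutator_operator_eq {R : Type*} [Ring R] {A B Y : R} (h3 : (3 : R) = 0)
    (hA : A * A = 0) (hB : B * B = 0)
    (hAB : (A + B + B * A) * (A + B + B * A) = 0)
    (hY : (1 + B) * (1 + A) = Y * ((1 + A) * (1 + B))) : Y - 1 = A * B := by
  obtain ⟨hanti, hABA, hBAB⟩ := anticomm_of_sq_eq_zero hA hB hAB
  have hBA : B * A = -(A * B) := eq_neg_of_add_eq_zero_right hanti
  have hinv : (1 + A) * (1 + B) * ((1 - B) * (1 - A)) = 1 := by
    have h : (1 + A) * (1 + B) * ((1 - B) * (1 - A)) =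
      1 - A * A - B * B - A * (B * B) + B * B * A + A * (B * B) * A := by noncomm_ring
    rw [h]; simp [hA, hB]
  have hY' : Y = (1 + B) * (1 + A) * ((1 - B) * (1 - A)) := by
    rw [hY, mul_assoc, hinv, mul_one]
  have h : (1 + B) * (1 + A) * ((1 - B) * (1 - A)) =
      1 - A * B + B * A - A * A - B * B - B * (A * A) - B * A * B + A * B * A + B * B * A
        + B * A * B * A := by noncomm_ring
  rw [hY', h, hA, hB, hBAB, hABA, hBA]
  have h' : (1 - A * B + -(A * B) - 0 - 0 - B * 0 - 0 + 0 + 0 * A + 0 * A) - 1 =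
      A * B - 3 * (A * B) := by noncomm_ring
  rw [h', h3]; simp

end Commutators

namespace SemiCubeAbelian

variable {G : Type*} [Group G] (hG : SemiCubeAbelian G)
include hG

theorem mul_cube_eq_one {e f : G} (he : e ^ 3 = 1) (hf : f ^ 3 = 1) : (e * f) ^ 3 = 1 :=
  (hG e f).2 (by rw [he, hf, one_mul])

/-- Two cubes agree exactly when the quotient has cube one. -/
theorem inv_mul_cube_eq_one_iff {g h : G} : (g⁻¹ * h) ^ 3 = 1 ↔ g ^ 3 = h ^ 3 := by
  rw [hG, inv_pow, inv_mul_eq_one]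

theorem commElt_cube_eq_one_iff {g h : G} : commElt g h ^ 3 = 1 ↔ Commute (g ^ 3) h := by
  rw [commElt_eq_inv_mul_conj, hG.inv_mul_cube_eq_one_iff, conj_inv_pow, mul_assoc,
    eq_inv_mul_iff_mul_eq]
  exact eq_comm

theorem commElt_cube_eq_one {e : G} (he : e ^ 3 = 1) (g : G) : commElt e g ^ 3 = 1 := by
  rw [hG.commElt_cube_eq_one_iff, he]
  exact Commute.one_left g

theorem mul_conj_mul_conj_eq_one {e : G} (he : e ^ 3 = 1) (g : G) :
    g⁻¹ * (g⁻¹ * e * g) * g * (g⁻¹ * e * g) * e = 1 := by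
  have h : g ^ 3 = (g * e) ^ 3 := by
    rw [← hG.inv_mul_cube_eq_one_iff, inv_mul_cancel_left, he]
  calc g⁻¹ * (g⁻¹ * e * g) * g * (g⁻¹ * e * g) * e = (g ^ 3)⁻¹ * (g * e) ^ 3 := by
        simp only [pow_succ, pow_zero]; group
    _ = 1 := by rw [← h, inv_mul_cancel]

theorem commute_conj {e : G} (he : e ^ 3 = 1) (g : G) : Commute e (g⁻¹ * e * g) := by
  have h := hG.mul_conj_mul_conj_eq_one he g
  have h' := hG.mul_conj_mul_conj_eq_one (e := e⁻¹) (by rw [inv_pow, he, inv_one]) g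
  have h₂ := eq_inv_of_mul_eq_one_right ((mul_assoc _ _ _).symm.trans h)
  have h₃ : e * (g⁻¹ * e * g) * (g⁻¹ * (g⁻¹ * e * g) * g) = 1 := by
    rw [← inv_inj, inv_one, ← h']; group
  have h₄ := eq_inv_of_mul_eq_one_left h₃
  exact h₄.trans h₂.symm

/-- An element of cube one is a left 2-Engel element. -/
theorem commElt_commElt_self {e : G} (he : e ^ 3 = 1) (g : G) :
    commElt (commElt e g) g = 1 := by
  have h := hG.mul_conj_mul_conj_eq_one he g
  have hc := hG.commute_conj he g
  have hf : (g⁻¹ * e * g) ^ 3 = 1 := by rw [conj_inv_pow, he]; group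
  obtain ⟨f, hfe⟩ : ∃ f, f = g⁻¹ * e * g := ⟨_, rfl⟩
  rw [← hfe] at h hc hf
  have h₂ : g⁻¹ * f * g = e⁻¹ * f⁻¹ := by
    rw [mul_assoc _ f e] at h
    rw [eq_inv_of_mul_eq_one_left h, mul_inv_rev]
  have h₃ : g⁻¹ * (e⁻¹ * f) * g = e⁻¹ * f := by
    calc g⁻¹ * (e⁻¹ * f) * g = (g⁻¹ * e * g)⁻¹ * (g⁻¹ * f * g) := by group
      _ = e⁻¹ * (f⁻¹ * f⁻¹) := by
        rw [← hfe, h₂, ← mul_assoc, ← mul_assoc, (hc.inv_inv).eq]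
      _ = e⁻¹ * (f⁻¹ * f⁻¹ * f ^ 3) := by rw [hf, mul_one]
      _ = e⁻¹ * f := by simp only [pow_succ, pow_zero]; group
  rw [commElt_eq_inv_mul_conj, commElt_eq_inv_mul_conj e g, ← hfe, h₃, inv_mul_cancel]

/-- The conjugates of an element of cube one commute. -/
theorem isMulCommutative_normalClosure {e : G} (he : e ^ 3 = 1) :
    IsMulCommutative (Subgroup.normalClosure {e}) := by
  refine Subgroup.isMulCommutative_closure ?_
  intro u hu v hv
  simp only [Group.mem_conjugatesOfSet_iff, Set.mem_singleton_iff, exists_eq_left] at hu hv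
  obtain ⟨g, rfl⟩ := isConj_iff.1 hu
  obtain ⟨h, rfl⟩ := isConj_iff.1 hv
  calc g * e * g⁻¹ * (h * e * h⁻¹)
      = g * (e * ((g⁻¹ * h)⁻¹⁻¹ * e * (g⁻¹ * h)⁻¹)) * g⁻¹ := by group
    _ = g * (((g⁻¹ * h)⁻¹⁻¹ * e * (g⁻¹ * h)⁻¹) * e) * g⁻¹ := by rw [(hG.commute_conj he _).eq]
    _ = h * e * h⁻¹ * (g * e * g⁻¹) := by group

theorem cube_eq_one_of_mem_normalClosure {e u : G} (he : e ^ 3 = 1)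
    (hu : u ∈ Subgroup.normalClosure {e}) : u ^ 3 = 1 := by
  induction hu using Subgroup.closure_induction with
  | mem u hu =>
    simp only [Group.mem_conjugatesOfSet_iff, Set.mem_singleton_iff, exists_eq_left] at hu
    obtain ⟨g, rfl⟩ := isConj_iff.1 hu
    rw [conj_pow, he, mul_one, mul_inv_cancel]
  | one => exact one_pow 3
  | mul u v _ _ hu hv => exact hG.mul_cube_eq_one hu hv
  | inv u _ hu => rw [inv_pow, hu, inv_one]

open scoped IsMulCommutative in
/-- On the normal closure of an element of cube one, the commutator operators anticommute,
and a commutator acts as their product. -/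
theorem commElt_commElt_relations {e : G} (he : e ^ 3 = 1) (x b : G) :
    commElt (commElt e x) b * commElt (commElt e b) x = 1 ∧
      commElt e (commElt x b) = commElt (commElt e b) x := by
  have := hG.isMulCommutative_normalClosure he
  let V := Subgroup.normalClosure {e}
  let conj (g : G) : AddMonoid.End (Additive V) :=
    MonoidHom.toAdditive (MulAut.conjNormal g⁻¹ : MulAut V).toMonoidHom
  have conj_apply (g : G) (u : V) :
      ((conj g (.ofMul u)).toMul : G) = g⁻¹ * u * g := by
    change ((MulAut.conjNormal g⁻¹ u : V) : G) = _
    rw [MulAut.conjNormal_apply, inv_inv]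
  have conj_mul (g h : G) : conj (g * h) = conj h * conj g := by
    ext u
    change (((conj (g * h) (.ofMul u.toMul)).toMul : V) : G) =
      ((conj h (.ofMul (conj g (.ofMul u.toMul)).toMul)).toMul : G)
    rw [conj_apply, conj_apply, conj_apply]
    group
  have comm_apply (g : G) (u : V) :
      (((conj g - 1) (.ofMul u)).toMul : G) = commElt (u : G) g := by
    change ((((conj g (.ofMul u)).toMul / u) : V) : G) = _
    rw [div_eq_inv_mul, Subgroup.coe_mul, conj_apply, commElt_eq_inv_mul_conj]
    rfl
  have comm_comm_apply (g h : G) (u : V) :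
      ((((conj h - 1) * (conj g - 1)) (.ofMul u)).toMul : G) = commElt (commElt (u : G) g) h := by
    rw [← comm_apply g, ← comm_apply h]
    rfl
  have sq_zero (g : G) : (conj g - 1) * (conj g - 1) = 0 := by
    ext u
    change ((((conj g - 1) * (conj g - 1)) (.ofMul u.toMul)).toMul : G) = 1
    rw [comm_comm_apply]
    exact hG.commElt_commElt_self (hG.cube_eq_one_of_mem_normalClosure he u.toMul.2) g
  have three : (3 : AddMonoid.End (Additive V)) = 0 := by
    ext u
    change (((3 : AddMonoid.End (Additive V)) (.ofMul u.toMul)).toMul : G) = 1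
    have h : (3 : AddMonoid.End (Additive V)) = 1 + 1 + 1 := by norm_num
    rw [h]
    change (u.toMul : G) * u.toMul * u.toMul = 1
    rw [← hG.cube_eq_one_of_mem_normalClosure he u.toMul.2, pow_succ, pow_two]
  have hprod : ((conj x - 1) + (conj b - 1) + (conj b - 1) * (conj x - 1)) *
      ((conj x - 1) + (conj b - 1) + (conj b - 1) * (conj x - 1)) = 0 := by
    have h : (conj x - 1) + (conj b - 1) + (conj b - 1) * (conj x - 1) = conj (x * b) - 1 := by
      rw [conj_mul, sub_mul, mul_sub, mul_one, one_mul]; abel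
    rw [h, sq_zero]
  have hY : (1 + (conj b - 1)) * (1 + (conj x - 1)) =
      conj (commElt x b) * ((1 + (conj x - 1)) * (1 + (conj b - 1))) := by
    simp only [add_sub_cancel, ← conj_mul]
    congr 1
    unfold commElt; group
  have hanti := (anticomm_of_sq_eq_zero (sq_zero x) (sq_zero b) hprod).1
  have hcomm := commutator_operator_eq three (sq_zero x) (sq_zero b) hprod hY
  let v : V := ⟨e, Subgroup.subset_normalClosure rfl⟩
  constructor
  · have h := congrArg (fun T : AddMonoid.End (Additive V) => ((T (.ofMul v)).toMul : G)) hanti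
    rw [add_comm] at h
    rw [← comm_comm_apply x b v, ← comm_comm_apply b x v]
    exact h
  · have h := congrArg (fun T : AddMonoid.End (Additive V) => ((T (.ofMul v)).toMul : G)) hcomm
    rw [← comm_comm_apply b x v, ← comm_apply (commElt x b) v]
    exact h

theorem conj_cube_eq_one {e : G} (he : e ^ 3 = 1) (g : G) : (g⁻¹ * e * g) ^ 3 = 1 := by
  rw [conj_eq_mul_commElt]
  exact hG.mul_cube_eq_one he (hG.commElt_cube_eq_one he g)

/-- An element commuting with all elements of cube one has conjugates with the same property. -/
theorem commute_conj_of_forall_commute {w : G} (hw : ∀ e : G, e ^ 3 = 1 → Commute w e)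
    (g : G) {e : G} (he : e ^ 3 = 1) : Commute (g⁻¹ * w * g) e := by
  have h := hw _ (hG.conj_cube_eq_one he g⁻¹)
  rw [inv_inv] at h
  calc g⁻¹ * w * g * e = g⁻¹ * (w * (g * e * g⁻¹)) * g := by group
    _ = g⁻¹ * (g * e * g⁻¹ * w) * g := by rw [h.eq]
    _ = e * (g⁻¹ * w * g) := by group

theorem commElt_right_commutator_eq_one {e : G} (he : e ^ 3 = 1) (x b : G) :
    commElt (commElt e b) (commElt x b) = 1 := by
  rw [(hG.commElt_commElt_relations (hG.commElt_cube_eq_one he b) x b).2,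
    hG.commElt_commElt_self he, commElt_eq_one_iff]
  exact Commute.one_left x

theorem commElt_commElt_left_cube {x : G} (hx : x ^ 9 = 1) (b : G) :
    commElt (commElt x b) x ^ 3 = 1 := by
  have he : (x ^ 3) ^ 3 = 1 := by rw [← pow_mul, hx]
  have h1 : commElt (x ^ 3) x = 1 := commElt_eq_one_iff.2 ((Commute.refl x).pow_left 3)
  obtain ⟨h, h'⟩ := hG.commElt_commElt_relations he x b
  rw [h1, commElt_eq_one_iff.2 (Commute.one_left b), one_mul] at h
  rw [h, commElt_eq_one_iff, ← hG.commElt_cube_eq_one_iff] at h'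
  rw [← commElt_inv, inv_pow, h', inv_one]

section TwoGenerators

variable {x b : G} (hgen : Subgroup.closure {x, b} = ⊤)
include hgen

theorem commElt_commElt_mem_center {e : G} (he : e ^ 3 = 1) :
    commElt (commElt e b) x ∈ Subgroup.center G := by
  refine mem_center_of_commute_generators hgen ?_ ?_
  · exact commElt_eq_one_iff.1 (hG.commElt_commElt_self (hG.commElt_cube_eq_one he b) x)
  · rw [eq_inv_of_mul_eq_one_right (hG.commElt_commElt_relations he x b).1]
    exact (commElt_eq_one_iff.1
      (hG.commElt_commElt_self (hG.commElt_cube_eq_one he x) b)).inv_left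

theorem commElt_commElt_mem_center_swap {e : G} (he : e ^ 3 = 1) :
    commElt (commElt e x) b ∈ Subgroup.center G := by
  rw [eq_inv_of_mul_eq_one_left (hG.commElt_commElt_relations he x b).1]
  exact inv_mem (hG.commElt_commElt_mem_center hgen he)

theorem commElt_commutator_mem_center {e : G} (he : e ^ 3 = 1) :
    commElt e (commElt x b) ∈ Subgroup.center G := by
  rw [(hG.commElt_commElt_relations he x b).2]
  exact hG.commElt_commElt_mem_center hgen he

theorem commElt_left_commutator_eq_one {e : G} (he : e ^ 3 = 1) :
    commElt (commElt e x) (commElt x b) = 1 := by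
  rw [(hG.commElt_commElt_relations (hG.commElt_cube_eq_one he x) x b).2]
  exact commElt_of_mem_center (hG.commElt_commElt_mem_center_swap hgen he) x

/-- The element `[x,b,b]` centralizes all elements of cube one. -/
theorem commute_commElt_commElt {e : G} (he : e ^ 3 = 1) :
    Commute (commElt (commElt x b) b) e := by
  have key : ∀ f : G, f ^ 3 = 1 →
      b⁻¹ * ((commElt x b)⁻¹ * f * commElt x b) * b =
        (commElt x b)⁻¹ * (b⁻¹ * f * b) * commElt x b := by
    intro f hf
    have hc := hG.commElt_commutator_mem_center hgen hf
    rw [conj_eq_mul_commElt f (commElt x b), conj_eq_mul_commElt (b⁻¹ * f * b),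
      conj_eq_mul_commElt f b, mul_commElt_of_mem_center hc,
      hG.commElt_right_commutator_eq_one hf, mul_one, ← conj_eq_mul_commElt f b]
    rw [mul_assoc, mul_assoc f, ← Subgroup.mem_center_iff.1 hc b]
    group
  generalize commElt x b = y at key ⊢
  have h := key _ (hG.conj_cube_eq_one he (b * y)⁻¹)
  have h' : y⁻¹ * (b⁻¹ * ((b * y)⁻¹⁻¹ * e * (b * y)⁻¹) * b) * y = e := by group
  rw [h'] at h
  have h'' : (commElt y b)⁻¹ * e * commElt y b = e := by
    rw [← h]
    nth_rewrite 2 [← h]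
    unfold commElt; group
  rw [mul_assoc, inv_mul_eq_iff_eq_mul] at h''
  exact h''.symm

end TwoGenerators

/-- The commutator `[x³,b]` expanded when `[x,b,x]` has cube one. -/
theorem commElt_cube_left {x b : G} (hgen : Subgroup.closure {x, b} = ⊤)
    (hv : commElt (commElt x b) x ^ 3 = 1) :
    commElt (x ^ 3) b = commElt x b ^ 3 * commElt (commElt (commElt x b) x) x *
      (commElt (commElt (commElt x b) x) (commElt x b))⁻¹ := by
  have hs := hG.commElt_commutator_mem_center hgen hv
  have hs3 := hG.commElt_cube_eq_one hv (commElt x b)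
  have hry := commElt_eq_one_iff.1 (hG.commElt_left_commutator_eq_one hgen hv)
  have hrv : Commute (commElt (commElt (commElt x b) x) x) (commElt (commElt x b) x) := by
    rw [commElt_eq_inv_mul_conj _ x]
    exact ((Commute.refl _).inv_left).mul_left (hG.commute_conj hv x).symm
  have hz : commElt (x ^ 3) b = (x⁻¹ * (x⁻¹ * commElt x b * x) * x) *
      (x⁻¹ * commElt x b * x) * commElt x b := by
    simp only [commElt, pow_succ, pow_zero]; group
  have hvx := conj_eq_mul_commElt (commElt (commElt x b) x) x
  have hyx := conj_eq_mul_commElt (commElt x b) x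
  have hvy := conj_eq_mul_commElt (commElt (commElt x b) x) (commElt x b)
  have hyxx : x⁻¹ * (commElt x b * commElt (commElt x b) x) * x =
      x⁻¹ * commElt x b * x * (x⁻¹ * commElt (commElt x b) x * x) := by group
  rw [hz, hyx, hyxx, hvx, hyx]
  generalize commElt (commElt (commElt x b) x) (commElt x b) = s at *
  generalize commElt (commElt (commElt x b) x) x = r at *
  generalize commElt (commElt x b) x = v at *
  generalize commElt x b = y at *
  have hsc (g : G) : s * g = g * s := (Subgroup.mem_center_iff.1 hs g).symm
  have hvy' : v * y = y * (v * s) := by rw [← hvy]; group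
  have hs2 : s * s = s⁻¹ := by
    rw [eq_inv_iff_mul_eq_one, ← hs3, pow_succ, pow_two]
  calc y * v * (v * r) * (y * v) * y = y * v * v * (r * y) * (v * y) := by group
    _ = y * v * (v * y) * r * (v * y) := by rw [hry.eq]; group
    _ = y * v * (y * (v * s)) * r * (y * (v * s)) := by rw [hvy']
    _ = y * (v * y) * v * (s * (r * y * v)) * s := by group
    _ = y * (y * (v * s)) * v * (y * r * v * s) * s := by rw [hvy', hsc, hry.eq]
    _ = y * y * v * (s * (v * y)) * r * v * s * s := by group
    _ = y * y * v * (v * y) * s * (r * v) * s * s := by rw [hsc]; group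
    _ = y * y * v * (y * (v * s)) * s * (v * r) * s * s := by rw [hvy', hrv.eq]
    _ = y * y * (v * y) * v * s * s * v * r * s * s := by group
    _ = y * y * (y * (v * s)) * v * (s * s * (v * r)) * s * s := by rw [hvy']; group
    _ = y * y * y * v * (s * v) * v * r * s * s * s * s := by
        rw [mul_assoc s s, hsc (v * r), hsc (v * r * s)]; group
    _ = y * y * y * v * v * (s * (v * r)) * s * s * s * s := by rw [hsc v]; group
    _ = y ^ 3 * v ^ 3 * r * (s ^ 3 * (s * s)) := by
        rw [hsc]; simp only [pow_succ, pow_zero]; group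
    _ = y ^ 3 * r * s⁻¹ := by rw [hv, hs3, hs2, mul_one, one_mul]

/-- The conclusion for a generating pair `x, b` with `x⁹ = 1` such that `[x,b,b]` is central
modulo the elements of cube one. -/
theorem commElt_relations {x b : G} (hgen : Subgroup.closure {x, b} = ⊤) (hx : x ^ 9 = 1)
    (hw : ∀ g, commElt (commElt (commElt x b) b) g ^ 3 = 1) :
    commElt (commElt x b) b ^ 3 = commElt (commElt (commElt (commElt x b) b) x) x ∧
      commElt (commElt (commElt (commElt x b) b) x) b ∈ Subgroup.center G := by
  have hv := hG.commElt_commElt_left_cube hx b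
  have hcube := hG.commElt_cube_left hgen hv
  have hwE : ∀ e : G, e ^ 3 = 1 → Commute (commElt (commElt x b) b) e :=
    fun e he => hG.commute_commElt_commElt hgen he
  have hwgE (g : G) {e : G} (he : e ^ 3 = 1) :
      Commute (commElt (commElt (commElt x b) b) g) e := by
    rw [commElt_eq_inv_mul_conj]
    exact (hwE e he).inv_left.mul_left (hG.commute_conj_of_forall_commute hwE g he)
  have hcen {e : G} (he : e ^ 3 = 1) := hG.commElt_commutator_mem_center hgen he
  have hw3 (g : G) : Commute (commElt (commElt x b) b ^ 3) g :=
    hG.commElt_cube_eq_one_iff.1 (hw g)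
  have swap_w := commElt_swap (commElt (commElt x b) b) x b
  have swap_y := commElt_swap (commElt x b) x b
  have hb := conj_eq_mul_commElt (commElt x b) b
  have hright {e : G} (he : e ^ 3 = 1) := hG.commElt_right_commutator_eq_one he x b
  have hleft {e : G} (he : e ^ 3 = 1) := hG.commElt_left_commutator_eq_one hgen he
  have hrel {e : G} (he : e ^ 3 = 1) := hG.commElt_commElt_relations he x b
  have hcenbx {e : G} (he : e ^ 3 = 1) := hG.commElt_commElt_mem_center hgen he
  have hzb : commElt (commElt (x ^ 3) b) b = 1 :=
    hG.commElt_commElt_self (by rw [← pow_mul, hx]) b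
  rw [commElt_eq_one_iff.2 (Commute.refl (commElt x b)), one_mul] at swap_y
  rw [hcube] at hzb
  generalize commElt x b = y at *
  generalize commElt y b = w at *
  generalize commElt y x = v at *
  generalize hpdef : commElt w x = p at *
  generalize htdef : commElt w b = t at *
  generalize hqdef : commElt w y = q at *
  have hp : p ^ 3 = 1 := hpdef ▸ hw x
  have ht : t ^ 3 = 1 := htdef ▸ hw b
  have hq : q ^ 3 = 1 := hqdef ▸ hw y
  have hpE {e : G} (he : e ^ 3 = 1) : Commute p e := hpdef ▸ hwgE x he
  have htE {e : G} (he : e ^ 3 = 1) : Commute t e := htdef ▸ hwgE b he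
  -- the commutator `[w,y]` in terms of `[p,b]` and `[t,x]`
  have hk : commElt p b = q * commElt t x * (commElt p y * commElt t y) := by
    have hct (g : G) := Subgroup.mem_center_iff.1 (hcen ht) g
    have hcp (g : G) := Subgroup.mem_center_iff.1 (hcen hp) g
    rw [conj_eq_mul_commElt p y, conj_eq_mul_commElt _ y, mul_commElt_of_mem_center (hcen ht),
      hleft ht, mul_one] at swap_w
    refine mul_left_cancel (a := p) (mul_left_cancel (a := t) ?_)
    rw [swap_w]
    calc q * (p * commElt p y) * (t * commElt t x * commElt t y)
        = q * p * (commElt p y * (t * commElt t x)) * commElt t y := by group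
      _ = p * q * t * commElt t x * (commElt p y * commElt t y) := by
          rw [(hpE hq).eq, ← hcp]; group
      _ = p * t * (q * commElt t x * (commElt p y * commElt t y)) := by
          rw [mul_assoc p q t, ← (htE hq).eq]; group
      _ = t * (p * (q * commElt t x * (commElt p y * commElt t y))) := by
          rw [(hpE ht).eq, mul_assoc]
  have hqy : commElt q y = 1 := by
    have h := hright hp
    rw [hk, mul_assoc, mul_commElt_of_mem_center (hcen hq),
      mul_commElt_of_mem_center (hcen (hG.commElt_cube_eq_one ht x)), hleft ht,
      commElt_of_mem_center (mul_mem (hcen hp) (hcen ht)), one_mul, mul_one] at h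
    exact h
  have hqx : commElt q x = commElt (commElt p b) x := by
    have hcom : commElt (commElt t x * (commElt p y * commElt t y)) x = 1 := by
      rw [mul_commElt, hG.commElt_commElt_self ht,
        commElt_of_mem_center (mul_mem (hcen hp) (hcen ht))]
      group
    have h := mul_commElt q (commElt t x * (commElt p y * commElt t y)) x
    rw [← mul_assoc q, ← hk, hcom, mul_one, mul_assoc, eq_inv_mul_iff_mul_eq,
      Subgroup.mem_center_iff.1 (hcenbx hp)] at h
    exact (mul_right_cancel h).symm
  have hvb : commElt v b = commElt v y * q * p * commElt p y := by
    have hwp : y⁻¹ * (w * p) * y = w * q * (p * commElt p y) := by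
      rw [← conj_eq_mul_commElt p y, ← hqdef, ← conj_eq_mul_commElt w y]; group
    rw [hwp, conj_eq_mul_commElt v y, ← mul_assoc, (hwE v hv).eq] at swap_y
    refine mul_left_cancel (a := v * w) ?_
    rw [swap_y, mul_assoc v, ← mul_assoc (commElt v y),
      ← mul_assoc (commElt v y), ← Subgroup.mem_center_iff.1 (hcen hv) w]
    group
  have hvbx : commElt (commElt v b) x = commElt (commElt p b) x * commElt p x := by
    have hs1 := commElt_of_mem_center (hcen hv) x
    have hqcen : commElt q x ∈ Subgroup.center G := hqx ▸ hcenbx hp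
    have hpp : commElt (p * commElt p y) x = commElt p x := by
      rw [mul_commElt, commElt_of_mem_center (hcen hp) x, mul_one, mul_assoc,
        Subgroup.mem_center_iff.1 (hcen hp), inv_mul_cancel_left]
    rw [hvb, mul_assoc, mul_assoc, mul_commElt_of_mem_center (hs1 ▸ one_mem _), hs1, one_mul,
      mul_commElt_of_mem_center hqcen, hpp, hqx]
  have hy3 : b⁻¹ * y ^ 3 * b = y ^ 3 * w ^ 3 := by
    have hqy' := (commElt_eq_one_iff.1 hqy).eq
    have hwq := (hwE q hq).eq
    have hwy : w * y = y * (w * q) := by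
      rw [← hqdef, ← conj_eq_mul_commElt w y]; group
    rw [← conj_inv_pow, hb]
    calc (y * w) ^ 3 = y * (w * y) * w * (y * w) := by
          simp only [pow_succ, pow_zero]; group
      _ = y * y * w * (q * w) * y * w := by rw [hwy]; group
      _ = y * y * w * w * (q * y) * w := by rw [← hwq]; group
      _ = y * y * w * (w * y) * (q * w) := by rw [hqy']; group
      _ = y * y * w * (y * (w * q)) * (w * q) := by rw [hwy, hwq]
      _ = y * y * (w * y) * w * q * w * q := by group
      _ = y * y * y * w * (q * w) * (q * w) * q := by rw [hwy]; group
      _ = y * y * y * w * (w * q) * (w * q) * q := by rw [hwq]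
      _ = y * y * y * w * w * (q * w) * q * q := by group
      _ = y ^ 3 * w ^ 3 * q ^ 3 := by
          rw [← hwq]; simp only [pow_succ, pow_zero]; group
      _ = y ^ 3 * w ^ 3 := by rw [hq, mul_one]
  have hw3eq : w ^ 3 = commElt (commElt v b) x := by
    have h := (hrel hv).1
    rw [commElt_eq_one_iff] at hzb
    have hsb := Subgroup.mem_center_iff.1 (inv_mem (hcen hv)) b
    have hconj : b⁻¹ * (y ^ 3 * commElt v x) * b = y ^ 3 * commElt v x := by
      have h' := hzb.eq
      rw [mul_assoc (y ^ 3 * _), ← hsb, ← mul_assoc, ← mul_assoc b] at h'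
      rw [mul_assoc, mul_right_cancel h', inv_mul_cancel_left]
    have hexp : b⁻¹ * (y ^ 3 * commElt v x) * b =
        y ^ 3 * commElt v x * (w ^ 3 * commElt (commElt v x) b) := by
      calc b⁻¹ * (y ^ 3 * commElt v x) * b
          = b⁻¹ * y ^ 3 * b * (b⁻¹ * commElt v x * b) := by group
        _ = y ^ 3 * (w ^ 3 * commElt v x) * commElt (commElt v x) b := by
            rw [hy3, conj_eq_mul_commElt]; group
        _ = _ := by rw [(hw3 _).eq]; group
    rw [hexp, mul_eq_left] at hconj
    rw [eq_inv_of_mul_eq_one_left hconj, eq_inv_of_mul_eq_one_right h]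
  have hpx : commElt p x ∈ Subgroup.center G := by
    have h : commElt p x = (commElt (commElt p b) x)⁻¹ * w ^ 3 := by
      rw [hw3eq, hvbx, inv_mul_cancel_left]
    rw [h]
    exact mul_mem (inv_mem (hcenbx hp)) (Subgroup.mem_center_iff.2 fun g => (hw3 g).eq.symm)
  have hpbx : commElt (commElt p b) x = 1 := by
    have h := (hrel hp).1
    rwa [commElt_of_mem_center hpx, one_mul] at h
  refine ⟨by rw [hw3eq, hvbx, hpbx, one_mul], ?_⟩
  refine mem_center_of_commute_generators hgen (commElt_eq_one_iff.1 hpbx) ?_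
  exact commElt_eq_one_iff.1 (hG.commElt_commElt_self hp b)

end SemiCubeAbelian

section ProperSubgroups

variable {G : Type*} [Group G]

/-- In a finite noncommutative `p`-group every element lies in a proper normal subgroup. -/
theorem IsPGroup.exists_normal_ne_top_mem {p : ℕ} [Fact p.Prime] [Finite G] (hG : IsPGroup p G)
    {a b : G} (hab : ¬ Commute a b) (g : G) :
    ∃ K : Subgroup G, K.Normal ∧ K ≠ ⊤ ∧ g ∈ K := by
  have := hG.isNilpotent
  rcases eq_top_or_exists_le_coatom (Subgroup.zpowers g) with h | ⟨K, hK, hle⟩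
  · refine absurd ?_ hab
    obtain ⟨i, rfl⟩ := Subgroup.mem_zpowers_iff.1 (h ▸ Subgroup.mem_top a)
    obtain ⟨j, rfl⟩ := Subgroup.mem_zpowers_iff.1 (h ▸ Subgroup.mem_top b)
    exact Commute.zpow_zpow_self g i j
  · exact ⟨K, Subgroup.NormalizerCondition.normal_of_coatom _
      Group.normalizerCondition_of_isNilpotent hK, hK.1, hle (Subgroup.mem_zpowers g)⟩

/-- If `G` is generated by `b` and an element of a normal subgroup `T`, then `T` contains all
commutators. -/
theorem commElt_mem_of_normal {T : Subgroup G} [T.Normal] {x b : G} (hx : x ∈ T)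
    (hgen : Subgroup.closure {x, b} = ⊤) (g h : G) : commElt g h ∈ T := by
  have htop : T ⊔ Subgroup.zpowers b = ⊤ := by
    rw [eq_top_iff, ← hgen, Subgroup.closure_le]
    rintro k (rfl | rfl)
    · exact Subgroup.mem_sup_left hx
    · exact Subgroup.mem_sup_right (Subgroup.mem_zpowers _)
  have hpow (k : G) : ∃ i : ℤ, (k : G ⧸ T) = (b : G ⧸ T) ^ i := by
    obtain ⟨t, ht, c, hc, rfl⟩ :=
      Subgroup.mem_sup_of_normal_left.1 (htop ▸ Subgroup.mem_top k)
    obtain ⟨i, rfl⟩ := Subgroup.mem_zpowers_iff.1 hc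
    exact ⟨i, by simp [(QuotientGroup.eq_one_iff t).2 ht]⟩
  obtain ⟨i, hi⟩ := hpow g
  obtain ⟨j, hj⟩ := hpow h
  rw [← QuotientGroup.eq_one_iff]
  change commElt (g : G ⧸ T) (h : G ⧸ T) = 1
  rw [hi, hj, commElt_eq_one_iff]
  exact Commute.zpow_zpow_self _ i j

/-- The elements of ninth power one of a normal subgroup in which they are closed under
products. -/
def ninthTorsion (K : Subgroup G)
    (hK : ∀ a ∈ K, ∀ b ∈ K, a ^ 9 = 1 → b ^ 9 = 1 → (a * b) ^ 9 = 1) : Subgroup G where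
  carrier := {k | k ∈ K ∧ k ^ 9 = 1}
  one_mem' := ⟨one_mem K, one_pow 9⟩
  mul_mem' ha hb := ⟨mul_mem ha.1 hb.1, hK _ ha.1 _ hb.1 ha.2 hb.2⟩
  inv_mem' ha := ⟨inv_mem ha.1, by rw [inv_pow, ha.2, inv_one]⟩

theorem ninthTorsion_normal (K : Subgroup G) [K.Normal]
    (hK : ∀ a ∈ K, ∀ b ∈ K, a ^ 9 = 1 → b ^ 9 = 1 → (a * b) ^ 9 = 1) :
    (ninthTorsion K hK).Normal :=
  ⟨fun k hk g => ⟨Subgroup.Normal.conj_mem ‹_› k hk.1 g, by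
    rw [conj_pow, hk.2, mul_one, mul_inv_cancel]⟩⟩

/-- The elements that are central modulo the elements of cube one. -/
def SemiCubeAbelian.centralModCubes (hG : SemiCubeAbelian G) : Subgroup G where
  carrier := {u | ∀ g, commElt u g ^ 3 = 1}
  one_mem' g := by rw [commElt_eq_one_iff.2 (Commute.one_left g), one_pow]
  mul_mem' {u v} hu hv g := by
    rw [mul_commElt]
    exact hG.mul_cube_eq_one (hG.conj_cube_eq_one (hu g) v) (hv g)
  inv_mem' {u} hu g := by
    have h : commElt u⁻¹ g = u⁻¹⁻¹ * (commElt u g)⁻¹ * u⁻¹ := by unfold commElt; group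
    rw [h]
    exact hG.conj_cube_eq_one (by rw [inv_pow, hu g, inv_one]) u⁻¹

end ProperSubgroups

/-- For a finite 3-group which is semi-3-abelian, not semi-9-abelian, and all of whose
proper subgroups are semi-9-abelian: if `(ab)⁹ = 1` and `a⁹b⁹ ≠ 1`, then
`[ab,b,b]³ = [ab,b,b,ab,ab]` and `[ab,b,b,ab,b] ∈ Z(G)`. -/
theorem inner_semi9abelian_case1 (G : Type*) [Group G] [Finite G]
    (hG : IsPGroup 3 G)
    (h3 : ∀ a b : G, (a * b) ^ 3 = 1 ↔ a ^ 3 * b ^ 3 = 1)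
    (h9 : ¬ (∀ a b : G, (a * b) ^ 9 = 1 ↔ a ^ 9 * b ^ 9 = 1))
    (hproper : ∀ H : Subgroup G, H ≠ ⊤ →
      ∀ a b : H, (a * b) ^ 9 = 1 ↔ a ^ 9 * b ^ 9 = 1)
    (a b : G) (hab : (a * b) ^ 9 = 1) (hab' : a ^ 9 * b ^ 9 ≠ 1) :
    (commElt (commElt (a * b) b) b) ^ 3 =
        commElt (commElt (commElt (commElt (a * b) b) b) (a * b)) (a * b) ∧
    commElt (commElt (commElt (commElt (a * b) b) b) (a * b)) b ∈
      Subgroup.center G := by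
  have hS : SemiCubeAbelian G := h3
  have : Fact (Nat.Prime 3) := ⟨Nat.prime_three⟩
  have hproper' {K : Subgroup G} (hK : K ≠ ⊤) {c d : G} (hc : c ∈ K) (hd : d ∈ K) :
      (c * d) ^ 9 = 1 ↔ c ^ 9 * d ^ 9 = 1 := by
    simpa [Subtype.ext_iff] using hproper K hK ⟨c, hc⟩ ⟨d, hd⟩
  have hncomm : ¬ Commute a b := fun h => hab' (by rw [← h.mul_pow, hab])
  have hgen : Subgroup.closure {a * b, b} = ⊤ := by
    by_contra hne
    have hb : b ∈ Subgroup.closure {a * b, b} := Subgroup.subset_closure (by simp)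
    have ha : a ∈ Subgroup.closure {a * b, b} :=
      (Subgroup.mul_mem_cancel_right _ hb).1 (Subgroup.subset_closure (by simp))
    exact hab' ((hproper' hne ha hb).1 hab)
  have hcomm9 (g h : G) : commElt g h ^ 9 = 1 := by
    obtain ⟨K, hKn, hK, hxK⟩ := hG.exists_normal_ne_top_mem hncomm (a * b)
    have hmul : ∀ c ∈ K, ∀ d ∈ K, c ^ 9 = 1 → d ^ 9 = 1 → (c * d) ^ 9 = 1 :=
      fun c hc d hd hc9 hd9 => (hproper' hK hc hd).2 (by rw [hc9, hd9, one_mul])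
    have := ninthTorsion_normal K hmul
    exact (commElt_mem_of_normal (T := ninthTorsion K hmul) ⟨hxK, hab⟩ hgen g h).2
  have hcube (g : G) : g ^ 3 ∈ hS.centralModCubes := by
    intro h
    obtain ⟨K, hKn, hK, hgK⟩ := hG.exists_normal_ne_top_mem hncomm g
    have hconj : h⁻¹ * g * h ∈ K := by simpa using hKn.conj_mem g hgK h⁻¹
    have h' := hcomm9 g h
    rw [commElt_eq_inv_mul_conj, hproper' hK (inv_mem hgK) hconj] at h'
    rw [commElt_eq_inv_mul_conj, hS.inv_mul_cube_eq_one_iff, ← conj_inv_pow, ← pow_mul, ← pow_mul]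
    rwa [inv_pow, inv_mul_eq_one] at h'
  have hv := hS.conj_cube_eq_one (hS.commElt_commElt_left_cube hab b) (commElt (a * b) b ^ 2)
  have hw : commElt (commElt (a * b) b) b =
      ((commElt (a * b) b ^ 2)⁻¹ * commElt (commElt (a * b) b) (a * b) * commElt (a * b) b ^ 2)⁻¹ *
        (commElt (a * b) b ^ 3)⁻¹ * ((a * b) ^ 3)⁻¹ * a ^ 3 * b ^ 3 := by
    simp only [commElt, pow_succ, pow_zero]; group
  have hmem : commElt (commElt (a * b) b) b ∈ hS.centralModCubes := by
    rw [hw]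
    exact mul_mem (mul_mem (mul_mem (mul_mem (inv_mem fun g => hS.commElt_cube_eq_one hv g)
      (inv_mem (hcube _))) (inv_mem (hcube _))) (hcube _)) (hcube _)
  exact hS.commElt_relations hgen hab hmem
end
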